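/- arXiv:2507.06716 — 4 statements merged into one kernel-verified Lean document; each statement's English description precedes it below -/
import Mathlib

section
/- Ground state representation: let σ ∈ (0,1], α ∈ (0,3/2) and σ < α < 1+σ. Then for every finitely supported φ : ℕ → ℝ one has Q^σ(φ) − Σ_{n≥1} W_{α,σ}(n)·φ(n)² = (1/2)·Σ_{m,n≥1, m≠n} (−K^σ_{m,n})·I_α(m)·I_α(n)·(φ(n)/I_α(n) − φ(m)/I_α(m))². -/
open Real Filter

/-- Generalized binomial coefficient via the Gamma function. -/
noncomputable def rbinom (a b : ℝ) : ℝ :=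
  Real.Gamma (a + 1) / (Real.Gamma (b + 1) * Real.Gamma (a - b + 1))

/-- Kernel of the fractional Laplacian `(-Δ_ℕ)^σ` on the discrete half-line. -/
noncomputable def Kker (σ : ℝ) (m n : ℕ) : ℝ :=
  (-1 : ℝ) ^ (m + n) *
    (rbinom (2 * σ) (σ + m - n) - rbinom (2 * σ) (σ + m + n))

/-- Quadratic form of `(-Δ_ℕ)^σ` (used for finitely supported `f` with `f 0 = 0`). -/
noncomputable def Qform (σ : ℝ) (f : ℕ → ℝ) : ℝ :=
  ∑' m : ℕ, ∑' n : ℕ, Kker σ m n * f m * f n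

/-- The Hardy-weight `W_{α,σ}`. -/
noncomputable def Wweight (σ α : ℝ) (n : ℕ) : ℝ :=
  4 ^ σ * (Real.Gamma (3/2 - α + σ) * Real.Gamma α /
            (Real.Gamma (α - σ) * Real.Gamma (3/2 - α))) *
    (Real.Gamma (n + α - σ - 1) * Real.Gamma (n - α + 2) /
      (Real.Gamma (n - α + σ + 2) * Real.Gamma (n + α - 1)))

/-- The Riesz potential `I_α`. -/
noncomputable def Riesz (α : ℝ) (n : ℕ) : ℝ :=
  (4 * n / (4 ^ α * Real.sqrt 2)) * Real.Gamma (3/2 - α) *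
    Real.Gamma (n + α - 1) / (Real.Gamma α * Real.Gamma (n - α + 2))

/-!
Conjugating by `I = I_α` and expanding the square, the formula is algebra once `K^σ I_α = I_{α-σ}`
is known. Both sides of that identity are governed by the discrete Laplacian `Δ_ℕ`: it commutes
with `K^σ` and lowers the order of the Riesz potential by one, so a two-step induction on the row
reduces everything to the first row.

The first row says that the columns `g_α = (-Δ_ℕ)^(-α) δ₁` satisfy `⟨g_b, g_c⟩ = g_{b+c}(1)`, a
well-poised hypergeometric summation. A contiguous relation shows that
`⟨g_b, g_c⟩ / g_{b+c}(1)` is unchanged under `c ↦ c - 1`. Its limit as `c → -∞` does not depend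
on `c`, so neither does the quotient itself, and at `c = 0` it equals `1` because `g_0 = δ₁`.
-/

namespace HalfLine

open Asymptotics Topology

/-! ### Quotients of rising factorials -/

lemma ascPochhammer_eval_succ_left {R : Type*} [CommSemiring R] (x : R) (k : ℕ) :
    (ascPochhammer R (k + 1)).eval x = x * (ascPochhammer R k).eval (x + 1) := by
  simp [ascPochhammer_succ_left]

lemma mul_ascPochhammer_eval_add_one {R : Type*} [CommSemiring R] (x : R) (k : ℕ) :
    x * (ascPochhammer R k).eval (x + 1) = (ascPochhammer R k).eval x * (x + k) := by
  rw [← ascPochhammer_eval_succ_left, ascPochhammer_succ_eval]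

lemma Gamma_add_natCast {x : ℝ} (hx : 0 < x) (k : ℕ) :
    Gamma (x + k) = Gamma x * (ascPochhammer ℝ k).eval x := by
  induction k with
  | zero => simp
  | succ k ih =>
    rw [ascPochhammer_succ_eval, ← mul_assoc, ← ih, Nat.cast_succ, ← add_assoc,
      Gamma_add_one (by positivity), mul_comm]

lemma GammaSeq_eq_div_ascPochhammer (s : ℝ) (n : ℕ) :
    GammaSeq s n = n ^ s * n.factorial / (ascPochhammer ℝ (n + 1)).eval s := by
  have eval_eq_prod (k : ℕ) :
      (ascPochhammer ℝ k).eval s = ∏ j ∈ Finset.range k, (s + j) := by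
    induction k with
    | zero => simp
    | succ k ih => rw [ascPochhammer_succ_eval, ih, Finset.prod_range_succ]
  rw [GammaSeq, eval_eq_prod]

/-- The quotient `(b)ₖ / (3 - b)ₖ` of rising factorials, the building block of the well-poised
hypergeometric series whose first parameter is `2`. -/
noncomputable def poisedRatio (b : ℝ) (k : ℕ) : ℝ :=
  (ascPochhammer ℝ k).eval b / (ascPochhammer ℝ k).eval (3 - b)

@[simp]
lemma poisedRatio_zero (b : ℝ) : poisedRatio b 0 = 1 := by simp [poisedRatio]

lemma poisedRatio_succ (b : ℝ) (k : ℕ) :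
    poisedRatio b (k + 1) = poisedRatio b k * ((b + k) / (3 - b + k)) := by
  simp only [poisedRatio, ascPochhammer_succ_eval, mul_div_mul_comm]

lemma poisedRatio_sub_one_succ {b : ℝ} (hb : b < 3) (k : ℕ) :
    poisedRatio (b - 1) (k + 1) =
      (b - 1) * (3 - b) * poisedRatio b k / ((3 - b + k) * (4 - b + k)) := by
  have hpos := ascPochhammer_pos k (3 - b) (by linarith)
  have hpos' := ascPochhammer_pos (k + 1) (4 - b) (by linarith)
  have hden : (3 - b) * (ascPochhammer ℝ (k + 1)).eval (4 - b) =
      (ascPochhammer ℝ k).eval (3 - b) * ((3 - b + k) * (4 - b + k)) := by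
    have h := mul_ascPochhammer_eval_add_one (3 - b) k
    rw [show 3 - b + 1 = 4 - b by ring] at h
    rw [ascPochhammer_succ_eval]
    linear_combination (4 - b + k) * h
  have h3 : 0 < 3 - b + k := by linarith
  have h4 : 0 < 4 - b + k := by linarith
  rw [poisedRatio, poisedRatio, ascPochhammer_eval_succ_left, sub_add_cancel,
    show 3 - (b - 1) = 4 - b by ring, mul_div_assoc', div_div,
    div_eq_div_iff hpos'.ne' (by positivity)]
  linear_combination -(b - 1) * (ascPochhammer ℝ k).eval b * hden

lemma abs_poisedRatio_le_one {b : ℝ} (hb : b ≤ 3 / 2) (k : ℕ) : |poisedRatio b k| ≤ 1 := by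
  induction k with
  | zero => simp
  | succ k ih =>
    rw [poisedRatio_succ, abs_mul]
    refine mul_le_one₀ ih (abs_nonneg _) ?_
    rw [abs_div, abs_of_pos (show 0 < 3 - b + k by linarith), div_le_one (by linarith), abs_le]
    constructor <;> linarith

/-! ### Polynomial growth -/

lemma isEquivalent_natCast_add_const (a : ℝ) :
    (fun n : ℕ => (n : ℝ) + a) ~[atTop] fun n => (n : ℝ) :=
  IsEquivalent.refl.add_const_of_norm_tendsto_atTop
    (tendsto_norm_atTop_atTop.comp tendsto_natCast_atTop_atTop)

lemma isBigO_rpow_comp_add_one_iff {f : ℕ → ℝ} {p : ℝ} :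
    ((fun n => f (n + 1)) =O[atTop] fun n : ℕ => (n : ℝ) ^ p) ↔
      f =O[atTop] fun n : ℕ => (n : ℝ) ^ p := by
  have hshift : (fun n : ℕ => ((n + 1 : ℕ) : ℝ) ^ p) =Θ[atTop] fun n : ℕ => (n : ℝ) ^ p := by
    refine IsTheta.rpow (.of_forall fun n => by positivity) (.of_forall fun n => by positivity) ?_
    simpa using (isEquivalent_natCast_add_const 1).isTheta
  rw [← hshift.isBigO_congr_right]
  conv_rhs => rw [← map_add_atTop_eq_nat 1, isBigO_map]
  rfl

lemma isBigO_rpow_mul {f g : ℕ → ℝ} {p r s : ℝ} (hf : f =O[atTop] fun n : ℕ => (n : ℝ) ^ p)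
    (hg : g =O[atTop] fun n : ℕ => (n : ℝ) ^ r) (hs : p + r = s) :
    (fun n => f n * g n) =O[atTop] fun n : ℕ => (n : ℝ) ^ s := by
  refine (hf.mul hg).congr' .rfl ?_
  filter_upwards [eventually_gt_atTop 0] with n hn
  rw [← hs, rpow_add (by exact_mod_cast hn)]

lemma summable_mul_of_isBigO_rpow {f g : ℕ → ℝ} {p r : ℝ}
    (hf : f =O[atTop] fun n : ℕ => (n : ℝ) ^ p) (hg : g =O[atTop] fun n : ℕ => (n : ℝ) ^ r)
    (hpr : p + r < -1) : Summable fun n => f n * g n :=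
  summable_of_isBigO_nat (summable_nat_rpow.2 hpr) (isBigO_rpow_mul hf hg rfl)

lemma isBigO_one_GammaSeq_inv (s : ℝ) :
    (fun n => (GammaSeq s n)⁻¹) =O[atTop] fun _ => (1 : ℝ) := by
  by_cases hs : Gamma s = 0
  · obtain ⟨m, rfl⟩ := (Gamma_eq_zero_iff s).1 hs
    have hzero : (fun _ => 0) =ᶠ[atTop] fun n => (GammaSeq (-m) n)⁻¹ := by
      filter_upwards [eventually_ge_atTop m] with n hn
      rw [GammaSeq_eq_div_ascPochhammer, ascPochhammer_eval_neg_coe_nat_of_lt (by omega)]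
      simp
    exact (isBigO_zero _ _).congr' hzero .rfl
  · exact ((GammaSeq_tendsto_Gamma s).inv₀ hs).isBigO_one ℝ

lemma poisedRatio_isBigO (b : ℝ) :
    poisedRatio b =O[atTop] fun n : ℕ => (n : ℝ) ^ (2 * b - 3) := by
  rw [← isBigO_rpow_comp_add_one_iff]
  have hbdd := (isBigO_one_GammaSeq_inv b).mul ((GammaSeq_tendsto_Gamma (3 - b)).isBigO_one ℝ)
  refine ((isBigO_refl (fun n : ℕ => (n : ℝ) ^ (2 * b - 3)) atTop).mul hbdd).congr' ?_ (by simp)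
  filter_upwards [eventually_gt_atTop 0] with n hn
  have hn' : (0 : ℝ) < n := by exact_mod_cast hn
  rw [GammaSeq_eq_div_ascPochhammer, GammaSeq_eq_div_ascPochhammer, poisedRatio,
    show 2 * b - 3 = b - (3 - b) by ring, rpow_sub hn']
  field_simp

lemma tendsto_poisedRatio_sub_natCast (b : ℝ) (k : ℕ) :
    Tendsto (fun N : ℕ => poisedRatio (b - N) k) atTop (𝓝 ((-1) ^ k)) := by
  induction k with
  | zero => simp
  | succ k ih =>
    have hquot : Tendsto (fun N : ℕ => (b - N + k) / (3 - (b - N) + k)) atTop (𝓝 (-1)) := by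
      have h := tendsto_add_mul_div_add_mul_atTop_nhds (b + k) (3 - b + k) (-1) one_ne_zero
      rw [div_one] at h
      exact h.congr fun N => by ring_nf
    simpa only [poisedRatio_succ, pow_succ] using ih.mul hquot

/-! ### The fractional Green function -/

/-- The value at `n = 1` of the fractional Green function `green α`. -/
noncomputable def greenOne (α : ℝ) : ℝ :=
  4 * Gamma (3 / 2 - α) / (4 ^ α * √π * Gamma (3 - α))

/-- The column `(-Δ_ℕ)^(-α) δ₁`. For `0 < α < 3/2` it is `√(2/π)` times the Riesz potential
`I_α`; written with rising factorials, the formula makes sense for all `α < 3/2` and for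
`α = -σ` it is the first column of the kernel `K^σ`. The truncated `n - 1` is harmless, since
`green α 0 = 0`. -/
noncomputable def green (α : ℝ) (n : ℕ) : ℝ :=
  greenOne α * (n * poisedRatio α (n - 1))

@[simp]
lemma green_zero_right (α : ℝ) : green α 0 = 0 := by simp [green]

lemma green_add_one (α : ℝ) (k : ℕ) :
    green α (k + 1) = greenOne α * ((k + 1) * poisedRatio α k) := by
  simp [green]

@[simp]
lemma green_one_right (α : ℝ) : green α 1 = greenOne α := by simp [green]

lemma greenOne_pos {α : ℝ} (hα : α < 3 / 2) : 0 < greenOne α := by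
  have h3 : 0 < 3 - α := by linarith
  unfold greenOne
  positivity

lemma greenOne_zero : greenOne 0 = 1 := by
  have Gamma_three_halves : Gamma (3 / 2) = √π / 2 := by
    rw [show (3 / 2 : ℝ) = 1 / 2 + 1 by norm_num, Gamma_add_one (by norm_num), Gamma_one_half_eq]
    ring
  have Gamma_three : Gamma 3 = 2 := by simp
  rw [greenOne, sub_zero, sub_zero, Gamma_three_halves, Gamma_three, rpow_zero]
  field_simp
  norm_num

lemma green_zero_left_of_ne_one {n : ℕ} (hn : n ≠ 1) : green 0 n = 0 := by
  rcases n with - | - | n <;>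
    simp_all [green, poisedRatio]

lemma greenOne_sub_one {α : ℝ} (hα : α < 3 / 2) :
    (3 - α) * greenOne (α - 1) = (6 - 4 * α) * greenOne α := by
  have h3 : 3 - α ≠ 0 := by linarith
  rw [greenOne, greenOne, show 3 / 2 - (α - 1) = 3 / 2 - α + 1 by ring,
    show 3 - (α - 1) = 3 - α + 1 by ring, Gamma_add_one (by linarith), Gamma_add_one h3,
    rpow_sub_one (by norm_num)]
  field_simp
  ring

lemma green_add_one_recurrence {α : ℝ} (hα : α < 3) (n : ℕ) :
    n * (n + 2 - α) * green α (n + 1) = (n + 1) * (n + α - 1) * green α n := by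
  cases n with
  | zero => simp
  | succ k =>
    have hk : 3 - α + k ≠ 0 := by linarith [k.cast_nonneg (α := ℝ)]
    rw [green_add_one, green_add_one, poisedRatio_succ]
    push_cast
    field_simp
    ring

lemma green_sub_one {α : ℝ} (hα : α < 3 / 2) (n : ℕ) :
    green (α - 1) (n + 1) = 2 * green α (n + 1) - green α (n + 2) - green α n := by
  have h3 : 3 - α ≠ 0 := by linarith
  have hone : greenOne (α - 1) = (6 - 4 * α) * greenOne α / (3 - α) := by
    rw [eq_div_iff h3, mul_comm, greenOne_sub_one hα]
  cases n with
  | zero =>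
    simp only [green_add_one, poisedRatio_succ, hone, green_zero_right, poisedRatio_zero,
      Nat.cast_zero, Nat.cast_one, add_zero, zero_add]
    field_simp
    ring
  | succ k =>
    have h3k : 3 - α + k ≠ 0 := by linarith
    have h4k : 4 - α + k ≠ 0 := by linarith
    have h4k' : 3 - α + (k + 1) ≠ 0 := by linarith
    simp only [green_add_one, poisedRatio_sub_one_succ (show α < 3 by linarith), poisedRatio_succ,
      hone]
    push_cast
    field_simp
    ring

lemma green_isBigO (α : ℝ) : green α =O[atTop] fun n : ℕ => (n : ℝ) ^ (2 * α - 2) := by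
  rw [← isBigO_rpow_comp_add_one_iff]
  have hlinear : (fun n : ℕ => (n : ℝ) + 1) =O[atTop] fun n : ℕ => (n : ℝ) ^ (1 : ℝ) := by
    simpa only [rpow_one] using (isEquivalent_natCast_add_const 1).isBigO
  simpa only [green_add_one] using
    (isBigO_rpow_mul hlinear (poisedRatio_isBigO α) (by ring)).const_mul_left _

/-! ### The semigroup law -/

lemma summable_green_mul_green {b c : ℝ} (hbc : b + c < 3 / 2) :
    Summable fun n => green b n * green c n :=
  summable_mul_of_isBigO_rpow (green_isBigO b) (green_isBigO c) (by linarith)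

-- The right-hand side is the telescoping certificate found by Zeilberger's algorithm.
lemma sum_range_green_contiguous {b c : ℝ} (hb : b < 3) (hc : c < 3 / 2) (N : ℕ) :
    ∑ n ∈ Finset.range (N + 1), ((3 - b - c) * (green b n * green (c - 1) n) -
        (6 - 4 * (b + c)) * (green b n * green c n)) =
      (2 * N + 1) * ((N + 2 - b) / (N + 2 - c)) * (green b (N + 1) * green c N) := by
  induction N with
  | zero => simp
  | succ N ih =>
    have h2 : (N : ℝ) + 2 - c ≠ 0 := by linarith
    have h3 : (N : ℝ) + 1 + 2 - c ≠ 0 := by linarith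
    have h3b : (N : ℝ) + 1 + 2 - b ≠ 0 := by linarith
    have recb := green_add_one_recurrence hb (N + 1)
    have recc := green_add_one_recurrence (show c < 3 by linarith) N
    have recc' := green_add_one_recurrence (show c < 3 by linarith) (N + 1)
    rw [Finset.sum_range_succ, ih, green_sub_one hc]
    push_cast at *
    have hb' : green b (N + 1 + 1) = (N + 1 + 1) * (N + 1 + b - 1) * green b (N + 1) /
        ((N + 1) * (N + 1 + 2 - b)) := by
      rw [eq_div_iff (by positivity), ← recb, mul_comm]
    have hc' : green c (N + 2) = (N + 1 + 1) * (N + 1 + c - 1) * green c (N + 1) /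
        ((N + 1) * (N + 1 + 2 - c)) := by
      rw [eq_div_iff (by positivity), ← recc', mul_comm]
    rw [hb', hc']
    field_simp
    linear_combination -green b (N + 1) * (N + 3 - c) * (2 * N + 4 - b - c) * recc

lemma tendsto_contiguous_boundary {b c : ℝ} (hbc : b + c < 3 / 2) :
    Tendsto
      (fun N : ℕ => (2 * N + 1) * ((N + 2 - b) / (N + 2 - c)) * (green b (N + 1) * green c N))
      atTop (𝓝 0) := by
  have hquot : Tendsto (fun N : ℕ => ((N : ℝ) + 2 - b) / (N + 2 - c)) atTop (𝓝 1) := by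
    simpa [add_sub_assoc, add_comm] using
      tendsto_add_mul_div_add_mul_atTop_nhds (2 - b) (2 - c) 1 one_ne_zero
  have hlinear : (fun N : ℕ => 2 * (N : ℝ) + 1) =O[atTop] fun N : ℕ => (N : ℝ) ^ (1 : ℝ) := by
    have h := ((isEquivalent_natCast_add_const (1 / 2)).isBigO.const_mul_left 2)
    simpa [mul_add] using h
  have hprod := (isBigO_rpow_mul (isBigO_rpow_mul hlinear
    (isBigO_rpow_comp_add_one_iff.2 (green_isBigO b)) rfl) (green_isBigO c) rfl).mul
      (hquot.isBigO_one ℝ)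
  have hpow : Tendsto (fun N : ℕ => (N : ℝ) ^ (1 + (2 * b - 2) + (2 * c - 2)) * 1) atTop
      (𝓝 0) := by
    simpa [Function.comp_def] using
      (tendsto_rpow_neg_atTop (show 0 < -(1 + (2 * b - 2) + (2 * c - 2)) by linarith)).comp
        tendsto_natCast_atTop_atTop
  exact (hprod.trans_tendsto hpow).congr fun N => by ring

lemma tsum_green_mul_green_sub_one {b c : ℝ} (hb : b < 3) (hc : c < 3 / 2) (hbc : b + c < 3 / 2) :
    (3 - b - c) * ∑' n, green b n * green (c - 1) n =
      (6 - 4 * (b + c)) * ∑' n, green b n * green c n := by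
  have hsum := ((summable_green_mul_green (show b + (c - 1) < 3 / 2 by linarith)).hasSum.mul_left
    (3 - b - c)).sub ((summable_green_mul_green hbc).hasSum.mul_left (6 - 4 * (b + c)))
  have hlim := hsum.tendsto_sum_nat.comp (tendsto_add_atTop_nat 1)
  refine sub_eq_zero.1 (tendsto_nhds_unique hlim ?_)
  exact (tendsto_contiguous_boundary hbc).congr fun N => (sum_range_green_contiguous hb hc N).symm

lemma tsum_green_mul_green_sub_natCast {b c : ℝ} (hb : b ≤ 0) (hc : c < 3 / 2) (N : ℕ) :
    (∑' n, green b n * green (c - N) n) / greenOne (b + (c - N)) =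
      (∑' n, green b n * green c n) / greenOne (b + c) := by
  induction N with
  | zero => simp
  | succ N ih =>
    have hsum := tsum_green_mul_green_sub_one (b := b) (c := c - N) (by linarith) (by linarith)
      (by linarith)
    have hone := greenOne_sub_one (show b + (c - N) < 3 / 2 by linarith)
    have hpos := greenOne_pos (show b + (c - N) < 3 / 2 by linarith)
    have hpos' := greenOne_pos (show b + (c - N) - 1 < 3 / 2 by linarith)
    have h3 : 3 - b - (c - N) ≠ 0 := by linarith
    rw [← ih, Nat.cast_succ, ← sub_sub, ← add_sub_assoc b (c - N) 1,
      div_eq_div_iff hpos'.ne' hpos.ne']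
    refine mul_left_cancel₀ h3 ?_
    linear_combination greenOne (b + (c - N)) * hsum -
      (∑' n, green b n * green (c - N) n) * hone

lemma Gamma_add_natCast_isEquivalent {x : ℝ} (hx : 0 < x) :
    (fun N : ℕ => Gamma (x + (N + 1 : ℕ))) ~[atTop] fun N => (N : ℝ) ^ x * N.factorial := by
  have hlim : Tendsto (fun N => Gamma x / GammaSeq x N) atTop (𝓝 1) := by
    have hΓ := (Gamma_pos_of_pos hx).ne'
    simpa only [div_self hΓ, Pi.div_def] using
      (tendsto_const_nhds (x := Gamma x)).div (GammaSeq_tendsto_Gamma x) hΓ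
  have hne : ∀ᶠ N : ℕ in atTop, (N : ℝ) ^ x * N.factorial ≠ 0 := by
    filter_upwards [eventually_gt_atTop 0] with N hN
    positivity
  refine (isEquivalent_iff_tendsto_one hne).2 (hlim.congr fun N => ?_)
  rw [GammaSeq_eq_div_ascPochhammer, Pi.div_apply, Gamma_add_natCast hx, div_div_eq_mul_div]

lemma greenOne_sub_isEquivalent {c : ℝ} (hc : c < 3 / 2) :
    (fun N : ℕ => greenOne (c - (N + 1 : ℕ))) ~[atTop]
      fun N : ℕ => 4 / √π * 4 ^ (N + 1 : ℕ) * (4 ^ c)⁻¹ * (N : ℝ) ^ (-3 / 2 : ℝ) := by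
  have hΓ := (Gamma_add_natCast_isEquivalent (show 0 < 3 / 2 - c by linarith)).div
    (Gamma_add_natCast_isEquivalent (show 0 < 3 - c by linarith))
  refine ((IsEquivalent.refl
    (u := fun N : ℕ => 4 / √π * 4 ^ (N + 1 : ℕ) * (4 ^ c)⁻¹)).mul hΓ).congr_left
      (.of_forall fun N => ?_) |>.congr_right ?_
  · have hshift (a : ℝ) : a - (c - (N + 1 : ℕ)) = a - c + (N + 1 : ℕ) := by ring
    simp only [greenOne, hshift, Pi.mul_apply, Pi.div_apply,
      rpow_sub (show (0 : ℝ) < 4 by norm_num), rpow_natCast]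
    field_simp
  · filter_upwards [eventually_gt_atTop 0] with N hN
    have hfact : (N.factorial : ℝ) ≠ 0 := by positivity
    simp only [Pi.mul_apply, Pi.div_apply]
    rw [mul_div_mul_right _ _ hfact, ← rpow_sub (by exact_mod_cast hN),
      show 3 / 2 - c - (3 - c) = -3 / 2 by ring]

lemma tendsto_greenOne_div_greenOne {b c : ℝ} (hc : c < 3 / 2) (hbc : b + c < 3 / 2) :
    Tendsto (fun N : ℕ => greenOne (c - N) / greenOne (b + (c - N))) atTop (𝓝 (4 ^ b)) := by
  rw [← tendsto_add_atTop_iff_nat 1]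
  have h := (greenOne_sub_isEquivalent hc).div (greenOne_sub_isEquivalent hbc)
  simp only [add_sub_assoc] at h
  refine h.symm.tendsto_nhds ?_
  refine tendsto_const_nhds.congr' ?_
  filter_upwards [eventually_gt_atTop 0] with N hN
  simp only [Pi.div_apply, rpow_add (show (0 : ℝ) < 4 by norm_num)]
  field_simp

lemma tendsto_tsum_green_mul_green_sub_natCast {b c : ℝ} (hb : b < 0) (hc : c < 3 / 2) :
    Tendsto (fun N : ℕ => (∑' n, green b n * green (c - N) n) / greenOne (b + (c - N))) atTop
      (𝓝 (4 ^ b * ∑' n, green b n * (n * (-1) ^ (n - 1)))) := by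
  have hterm (n : ℕ) : Tendsto (fun N : ℕ => green b n * (n * poisedRatio (c - N) (n - 1)))
      atTop (𝓝 (green b n * (n * (-1) ^ (n - 1)))) :=
    ((tendsto_poisedRatio_sub_natCast c (n - 1)).const_mul _).const_mul _
  have hbound : Summable fun n : ℕ => ‖green b n * n‖ := by
    have hlinear : (fun n : ℕ => (n : ℝ)) =O[atTop] fun n : ℕ => (n : ℝ) ^ (1 : ℝ) := by
      simpa only [rpow_one] using isBigO_refl _ _
    exact (summable_mul_of_isBigO_rpow (green_isBigO b) hlinear (by linarith)).norm
  have hle (N n : ℕ) : ‖green b n * (n * poisedRatio (c - N) (n - 1))‖ ≤ ‖green b n * n‖ := by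
    rw [← mul_assoc, norm_mul]
    refine mul_le_of_le_one_right (norm_nonneg _) (abs_poisedRatio_le_one ?_ _)
    linarith [N.cast_nonneg (α := ℝ)]
  have hseries := tendsto_tsum_of_dominated_convergence hbound hterm (.of_forall fun N => hle N)
  refine ((tendsto_greenOne_div_greenOne hc (show b + c < 3 / 2 by linarith)).mul hseries).congr
    fun N => ?_
  rw [div_mul_eq_mul_div, ← tsum_mul_left]
  simp only [green, mul_left_comm]

lemma tsum_green_mul_green_div {b c : ℝ} (hb : b < 0) (hc : c < 3 / 2) :
    (∑' n, green b n * green c n) / greenOne (b + c) =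
      4 ^ b * ∑' n, green b n * (n * (-1) ^ (n - 1)) :=
  tendsto_nhds_unique (tendsto_const_nhds.congr fun N =>
    (tsum_green_mul_green_sub_natCast hb.le hc N).symm)
    (tendsto_tsum_green_mul_green_sub_natCast hb hc)

theorem hasSum_green_mul_green {b c : ℝ} (hb : b < 0) (hc : c < 3 / 2) :
    HasSum (fun n => green b n * green c n) (greenOne (b + c)) := by
  have hzero : ∑' n, green b n * green 0 n = greenOne b := by
    rw [tsum_eq_single 1 fun n hn => by rw [green_zero_left_of_ne_one hn, mul_zero],
      green_one_right, green_one_right, greenOne_zero, mul_one]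
  have hratio : (∑' n, green b n * green c n) / greenOne (b + c) = 1 := by
    rw [tsum_green_mul_green_div hb hc, ← tsum_green_mul_green_div (c := 0) hb (by norm_num), hzero,
      add_zero, div_self (greenOne_pos (by linarith)).ne']
  rw [← eq_of_div_eq_one hratio]
  exact (summable_green_mul_green (by linarith)).hasSum

/-! ### The kernel -/

lemma mul_inv_Gamma_add_one (s : ℝ) : s * (Gamma (s + 1))⁻¹ = (Gamma s)⁻¹ := by
  rcases eq_or_ne s 0 with rfl | hs
  · simp [Gamma_zero]
  · rw [Gamma_add_one hs, mul_inv, mul_inv_cancel_left₀ hs]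

lemma rbinom_sub_right (a b : ℝ) : rbinom a (a - b) = rbinom a b := by
  rw [rbinom, rbinom, sub_sub_cancel, mul_comm (Gamma (a - b + 1))]

lemma add_one_mul_rbinom_add_one (a b : ℝ) :
    (b + 1) * rbinom a (b + 1) = (a - b) * rbinom a b := by
  have hb := mul_inv_Gamma_add_one (b + 1)
  have hab := mul_inv_Gamma_add_one (a - b)
  rw [rbinom, rbinom, show a - (b + 1) + 1 = a - b by ring, div_eq_mul_inv, div_eq_mul_inv,
    mul_inv, mul_inv]
  linear_combination Gamma (a + 1) * (Gamma (a - b))⁻¹ * hb -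
    Gamma (a + 1) * (Gamma (b + 1))⁻¹ * hab

lemma rbinom_two_mul_add_natCast {σ : ℝ} (hσ : -1 < σ) (k : ℕ) :
    rbinom (2 * σ) (σ + k) = rbinom (2 * σ) σ *
      ((-1) ^ k * ((ascPochhammer ℝ k).eval (-σ) / (ascPochhammer ℝ k).eval (σ + 1))) := by
  induction k with
  | zero => simp
  | succ k ih =>
    have hk : (0 : ℝ) < σ + k + 1 := by linarith [k.cast_nonneg (α := ℝ)]
    have hk' : σ + 1 + k ≠ 0 := by linarith
    refine mul_left_cancel₀ hk.ne' ?_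
    rw [Nat.cast_succ, ← add_assoc, add_one_mul_rbinom_add_one, ih, ascPochhammer_succ_eval,
      ascPochhammer_succ_eval]
    field_simp
    ring

lemma rbinom_two_mul_self {σ : ℝ} (hσ : -1 / 2 < σ) :
    rbinom (2 * σ) σ = 4 ^ σ * Gamma (σ + 1 / 2) / (√π * Gamma (σ + 1)) := by
  have hΓ := Gamma_pos_of_pos (show 0 < σ + 1 by linarith)
  have hdup := Gamma_mul_Gamma_add_half (σ + 1 / 2)
  have hpow : (2 : ℝ) ^ (1 - 2 * (σ + 1 / 2)) * 4 ^ σ = 1 := by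
    rw [show (4 : ℝ) = 2 ^ (2 : ℝ) by norm_num, ← rpow_mul (by norm_num),
      ← rpow_add (by norm_num), show 1 - 2 * (σ + 1 / 2) + 2 * σ = 0 by ring, rpow_zero]
  rw [show σ + 1 / 2 + 1 / 2 = σ + 1 by ring, show 2 * (σ + 1 / 2) = 2 * σ + 1 by ring] at hdup
  rw [show 2 * (σ + 1 / 2) = 2 * σ + 1 by ring] at hpow
  rw [rbinom, show 2 * σ - σ + 1 = σ + 1 by ring, div_eq_div_iff (by positivity) (by positivity)]
  linear_combination -(4 ^ σ * Gamma (σ + 1)) * hdup -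
    √π * Gamma (σ + 1) * Gamma (2 * σ + 1) * hpow

lemma greenOne_neg {σ : ℝ} (hσ : -1 / 2 < σ) :
    greenOne (-σ) = rbinom (2 * σ) σ * ((4 * σ + 2) / ((σ + 1) * (σ + 2))) := by
  have h1 : σ + 1 ≠ 0 := by linarith
  have h2 : σ + 2 ≠ 0 := by linarith
  have hhalf : Gamma (3 / 2 - -σ) = (σ + 1 / 2) * Gamma (σ + 1 / 2) := by
    rw [← Gamma_add_one (by linarith)]
    ring_nf
  have hthree : Gamma (3 - -σ) = (σ + 2) * ((σ + 1) * Gamma (σ + 1)) := by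
    rw [← Gamma_add_one h1, show σ + 1 + 1 = σ + 2 by ring, ← Gamma_add_one h2]
    ring_nf
  rw [greenOne, rbinom_two_mul_self hσ, hhalf, hthree, rpow_neg (by norm_num)]
  field_simp
  ring

lemma Kker_one_add_one_eq_rbinom (σ : ℝ) (k : ℕ) :
    (σ + 1 + k) * (σ + 2 + k) * Kker σ 1 (k + 1) =
      (-1) ^ k * ((4 * σ + 2) * (k + 1) * rbinom (2 * σ) (σ + k)) := by
  have hrec := add_one_mul_rbinom_add_one (2 * σ) (σ + k)
  have hrec' := add_one_mul_rbinom_add_one (2 * σ) (σ + k + 1)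
  have hleft : rbinom (2 * σ) (σ + (1 : ℕ) - (k + 1 : ℕ)) = rbinom (2 * σ) (σ + k) := by
    rw [← rbinom_sub_right]
    push_cast
    ring_nf
  have hright : σ + (1 : ℕ) + (k + 1 : ℕ) = σ + k + 1 + 1 := by
    push_cast
    ring
  rw [Kker, hleft, hright, add_left_comm, ← two_mul, pow_add, pow_mul, neg_one_sq, one_pow,
    mul_one]
  linear_combination -(-1) ^ k * ((σ + k + 1) * hrec' + (σ - k - 1) * hrec)

lemma poisedRatio_neg {σ : ℝ} (hσ : -1 < σ) (k : ℕ) :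
    poisedRatio (-σ) k = (σ + 1) * (σ + 2) / ((σ + 1 + k) * (σ + 2 + k)) *
      ((ascPochhammer ℝ k).eval (-σ) / (ascPochhammer ℝ k).eval (σ + 1)) := by
  have hpos := ascPochhammer_pos k (σ + 1) (by linarith)
  have hpos' := ascPochhammer_pos k (σ + 3) (by linarith)
  have h1 : σ + 1 + k ≠ 0 := by linarith
  have h2 : σ + 2 + k ≠ 0 := by linarith
  have hden : (σ + 1) * (σ + 2) * (ascPochhammer ℝ k).eval (σ + 3) =
      (ascPochhammer ℝ k).eval (σ + 1) * (σ + 1 + k) * (σ + 2 + k) := by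
    have hone := mul_ascPochhammer_eval_add_one (σ + 1) k
    have htwo := mul_ascPochhammer_eval_add_one (σ + 2) k
    rw [show σ + 1 + 1 = σ + 2 by ring] at hone
    rw [show σ + 2 + 1 = σ + 3 by ring] at htwo
    linear_combination (σ + 1) * htwo + (σ + 2 + k) * hone
  rw [poisedRatio, sub_neg_eq_add, add_comm 3 σ, div_mul_div_comm,
    div_eq_div_iff hpos'.ne' (by positivity)]
  linear_combination -(ascPochhammer ℝ k).eval (-σ) * hden

lemma Kker_one {σ : ℝ} (hσ : -1 / 2 < σ) (n : ℕ) : Kker σ 1 n = green (-σ) n := by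
  cases n with
  | zero => simp [Kker]
  | succ k =>
    have h1 : 0 < σ + 1 := by linarith
    have h2 : 0 < σ + 2 := by linarith
    have hk1 : 0 < σ + 1 + k := by linarith
    have hk2 : 0 < σ + 2 + k := by linarith
    have hsign : (-1 : ℝ) ^ k * (-1) ^ k = 1 := by
      rw [← mul_pow, neg_one_mul, neg_neg, one_pow]
    refine mul_left_cancel₀ (mul_pos hk1 hk2).ne' ?_
    rw [Kker_one_add_one_eq_rbinom, rbinom_two_mul_add_natCast (by linarith), green_add_one,
      greenOne_neg hσ, poisedRatio_neg (by linarith)]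
    generalize (ascPochhammer ℝ k).eval (-σ) / (ascPochhammer ℝ k).eval (σ + 1) = r
    generalize rbinom (2 * σ) σ = c
    field_simp
    linear_combination (4 * σ + 2) * c * r * hsign

lemma Kker_zero_left (σ : ℝ) (n : ℕ) : Kker σ 0 n = 0 := by
  have h := rbinom_sub_right (2 * σ) (σ + n)
  rw [show 2 * σ - (σ + n) = σ - n by ring] at h
  simp [Kker, h]

lemma Kker_zero_right (σ : ℝ) (m : ℕ) : Kker σ m 0 = 0 := by simp [Kker]

lemma Kker_comm (σ : ℝ) (m n : ℕ) : Kker σ m n = Kker σ n m := by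
  rw [Kker, Kker, ← rbinom_sub_right, show 2 * σ - (σ + m - n) = σ + n - m by ring,
    add_comm n m, add_right_comm]

lemma Kker_add_two_left (σ : ℝ) (m n : ℕ) :
    Kker σ (m + 2) (n + 1) + Kker σ m (n + 1) = Kker σ (m + 1) (n + 2) + Kker σ (m + 1) n := by
  simp only [Kker]
  push_cast
  rw [show σ + (m + 2) - (n + 1) = σ + (m + 1) - n by ring,
    show σ + (m + 1) - (n + 2) = σ + m - (n + 1) by ring,
    show σ + (m + 2) + (n + 1) = σ + (m + 1) + (n + 2) by ring,
    show σ + m + (n + 1) = σ + (m + 1) + n by ring]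
  ring

lemma Kker_isBigO {σ : ℝ} (hσ : -1 / 2 < σ) (m : ℕ) :
    Kker σ m =O[atTop] fun n : ℕ => (n : ℝ) ^ (-2 * σ - 2) := by
  induction m using Nat.twoStepInduction with
  | zero => exact (isBigO_zero _ _).congr_left fun n => (Kker_zero_left σ n).symm
  | one =>
    rw [show -2 * σ - 2 = 2 * -σ - 2 by ring]
    exact (green_isBigO (-σ)).congr_left fun n => (Kker_one hσ n).symm
  | more m hm hm' =>
    rw [← isBigO_rpow_comp_add_one_iff] at hm ⊢
    have hm'' := isBigO_rpow_comp_add_one_iff.2 (isBigO_rpow_comp_add_one_iff.2 hm')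
    exact ((hm''.add hm').sub hm).congr_left fun n => by
      linear_combination -Kker_add_two_left σ m n

/-! ### The kernel acts on the fractional Green functions -/

lemma hasSum_add_two_add_mul {R : Type*} [Ring R] [TopologicalSpace R] [IsTopologicalRing R]
    [T2Space R] {f g : ℕ → R} {a : R} (hf : f 0 = 0) (hg : g 0 = 0)
    (hfg : Summable fun n => f (n + 1) * g n) (hfg' : Summable fun n => f n * g (n + 1))
    (h : HasSum (fun n => f (n + 1) * (g (n + 2) + g n)) a) :
    HasSum (fun n => (f (n + 2) + f n) * g (n + 1)) a := by
  have hshift := (hasSum_nat_add_iff' 1).2 hfg.hasSum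
  have hshift' := (hasSum_nat_add_iff' 1).2 hfg'.hasSum
  simp only [Finset.range_one, Finset.sum_singleton, hf, hg, zero_mul, mul_zero, sub_zero]
    at hshift hshift'
  simp only [mul_add] at h
  rw [h.unique (hshift'.add hfg.hasSum), add_comm]
  simpa only [add_mul] using hshift.add hfg'.hasSum

theorem hasSum_Kker_mul_green {σ : ℝ} (hσ : 0 < σ) (m : ℕ) {α : ℝ} (hα : α < 3 / 2) :
    HasSum (fun n => Kker σ m n * green α n) (green (α - σ) m) := by
  induction m using Nat.twoStepInduction generalizing α with
  | zero => simpa only [Kker_zero_left, zero_mul, green_zero_right] using hasSum_zero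
  | one =>
    simpa only [Kker_one (show -1 / 2 < σ by linarith), green_one_right, neg_add_eq_sub] using
      hasSum_green_mul_green (neg_lt_zero.2 hσ) hα
  | more m hm hm' =>
    have hK := Kker_isBigO (show -1 / 2 < σ by linarith) (m + 1)
    have hG := green_isBigO α
    have hsummable := summable_mul_of_isBigO_rpow (isBigO_rpow_comp_add_one_iff.2 hK) hG
      (by linarith)
    have hsummable' := summable_mul_of_isBigO_rpow hK (isBigO_rpow_comp_add_one_iff.2 hG)
      (by linarith)
    have tail {j : ℕ} {β a : ℝ} (h : HasSum (fun n => Kker σ j n * green β n) a) :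
        HasSum (fun n => Kker σ j (n + 1) * green β (n + 1)) a := by
      simpa using (hasSum_nat_add_iff' 1).2 h
    have hlaplacian : HasSum
        (fun n => Kker σ (m + 1) (n + 1) * (green α (n + 2) + green α n))
        (2 * green (α - σ) (m + 1) - green (α - 1 - σ) (m + 1)) :=
      ((tail (hm' hα)).mul_left 2 |>.sub (tail (hm' (by linarith)))).congr_fun fun n => by
        linear_combination Kker σ (m + 1) (n + 1) * green_sub_one hα n
    have hsum := (hasSum_add_two_add_mul (Kker_zero_right σ _) (green_zero_right α) hsummable
      hsummable' hlaplacian).sub (tail (hm hα))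
    have hgreen := green_sub_one (show α - σ < 3 / 2 by linarith) m
    rw [← hasSum_nat_add_iff' 1, Finset.sum_range_one, Kker_zero_right, zero_mul, sub_zero]
    convert hsum using 1
    · funext n
      linear_combination green α (n + 1) * Kker_add_two_left σ m n
    · rw [sub_right_comm α 1 σ]
      linear_combination hgreen

/-! ### Riesz potentials -/

lemma Riesz_eq_green {α : ℝ} (hα0 : 0 < α) (hα : α < 3) (n : ℕ) :
    Riesz α n = √π / √2 * green α n := by
  cases n with
  | zero => simp [Riesz]
  | succ k =>
    have hΓ' := Gamma_pos_of_pos (show 0 < 3 - α by linarith)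
    have hnum : Gamma ((k + 1 : ℕ) + α - 1) = Gamma α * (ascPochhammer ℝ k).eval α := by
      rw [← Gamma_add_natCast hα0]
      push_cast
      ring_nf
    have hden : Gamma ((k + 1 : ℕ) - α + 2) =
        Gamma (3 - α) * (ascPochhammer ℝ k).eval (3 - α) := by
      rw [← Gamma_add_natCast (by linarith)]
      push_cast
      ring_nf
    rw [Riesz, hnum, hden, green_add_one, greenOne, poisedRatio]
    push_cast
    field_simp

lemma Riesz_pos {α : ℝ} (hα0 : 0 < α) (hα : α < 3 / 2) {n : ℕ} (hn : 1 ≤ n) :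
    0 < Riesz α n := by
  have hn' : (1 : ℝ) ≤ n := by exact_mod_cast hn
  have := Gamma_pos_of_pos hα0
  have := Gamma_pos_of_pos (show 0 < 3 / 2 - α by linarith)
  have := Gamma_pos_of_pos (show 0 < n + α - 1 by linarith)
  have := Gamma_pos_of_pos (show 0 < n - α + 2 by linarith)
  unfold Riesz
  positivity

lemma Wweight_mul_Riesz {σ α : ℝ} (hα0 : 0 < α) (hα : α < 3 / 2) {n : ℕ} (hn : 1 ≤ n) :
    Wweight σ α n * Riesz α n = Riesz (α - σ) n := by
  have hn' : (1 : ℝ) ≤ n := by exact_mod_cast hn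
  have := Gamma_pos_of_pos hα0
  have hhalf := Gamma_pos_of_pos (show 0 < 3 / 2 - α by linarith)
  have hnum := Gamma_pos_of_pos (show 0 < n + α - 1 by linarith)
  have hden := Gamma_pos_of_pos (show 0 < n - α + 2 by linarith)
  rw [Wweight, Riesz, Riesz, rpow_sub (by norm_num), ← sub_add, ← add_sub_assoc, ← sub_add]
  generalize Gamma (3 / 2 - α + σ) = c
  generalize Gamma (3 / 2 - α) = d at *
  field_simp

theorem hasSum_Kker_mul_Riesz {σ α : ℝ} (hσ : 0 < σ) (hσα : σ < α) (hα : α < 3 / 2) {m : ℕ}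
    (hm : 1 ≤ m) : HasSum (fun n => Kker σ m n * Riesz α n) (Wweight σ α m * Riesz α m) := by
  rw [Wweight_mul_Riesz (by linarith) hα hm, Riesz_eq_green (by linarith) (by linarith)]
  refine ((hasSum_Kker_mul_green hσ m hα).mul_left (√π / √2)).congr_fun fun n => ?_
  rw [Riesz_eq_green (by linarith) (by linarith), mul_left_comm]

/-! ### Ground states of symmetric kernels -/

lemma hasSum_prod_of_finset_rows {ι κ M : Type*} [AddCommMonoid M] [TopologicalSpace M]
    [ContinuousAdd M] {T : Finset ι} {A : ι → κ → M} {a : ι → M}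
    (hzero : ∀ i ∉ T, ∀ j, A i j = 0) (hrow : ∀ i ∈ T, HasSum (A i) (a i)) :
    HasSum (fun p : ι × κ => A p.1 p.2) (∑ i ∈ T, a i) := by
  classical
  have hrow' (i : ι) (hi : i ∈ T) :
      HasSum (fun p : ι × κ => if p.1 = i then A p.1 p.2 else 0) (a i) := by
    rw [← (Prod.mk_right_injective i).hasSum_iff]
    · simpa [Function.comp_def] using hrow i hi
    · rintro ⟨i', j⟩ hij
      exact if_neg fun h => hij ⟨j, by simp_all⟩
  refine (hasSum_sum hrow').congr_fun fun p => ?_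
  rw [Finset.sum_ite_eq]
  split_ifs with hp
  · rfl
  · exact hzero _ hp _

theorem hasSum_ground_state {ι R : Type*} [CommRing R] [TopologicalSpace R] [IsTopologicalRing R]
    {K : ι → ι → R} {I w u : ι → R} {T : Finset ι} (hK : ∀ i j, K i j = K j i)
    (hI : ∀ i ∈ T, HasSum (fun j => K i j * I j) (w i * I i)) (hu : ∀ i ∉ T, u i = 0) :
    HasSum (fun p : ι × ι => -K p.1 p.2 * I p.1 * I p.2 * (u p.2 - u p.1) ^ 2)
      (2 * (∑ i ∈ T, ∑ j ∈ T, K i j * (I i * u i) * (I j * u j) -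
        ∑ i ∈ T, w i * (I i * u i) ^ 2)) := by
  have hleft : HasSum (fun p : ι × ι => K p.1 p.2 * I p.2 * (I p.1 * u p.1 ^ 2))
      (∑ i ∈ T, w i * I i * (I i * u i ^ 2)) :=
    hasSum_prod_of_finset_rows (A := fun i j => K i j * I j * (I i * u i ^ 2))
      (fun i hi j => by simp [hu i hi]) fun i hi => (hI i hi).mul_right _
  have hright : HasSum (fun p : ι × ι => K p.1 p.2 * I p.1 * (I p.2 * u p.2 ^ 2))
      (∑ i ∈ T, w i * I i * (I i * u i ^ 2)) := by
    rw [← (Equiv.prodComm ι ι).hasSum_iff]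
    exact hleft.congr_fun fun p => by simp [hK p.2 p.1]
  have hcross : HasSum (fun p : ι × ι => K p.1 p.2 * (I p.1 * u p.1) * (I p.2 * u p.2))
      (∑ i ∈ T, ∑ j ∈ T, K i j * (I i * u i) * (I j * u j)) := by
    rw [← Finset.sum_product']
    refine hasSum_sum_of_ne_finset_zero fun p hp => ?_
    rw [Finset.mem_product, not_and_or] at hp
    rcases hp with hp | hp <;> simp [hu _ hp]
  have hdiag : ∑ i ∈ T, w i * (I i * u i) ^ 2 = ∑ i ∈ T, w i * I i * (I i * u i ^ 2) :=
    Finset.sum_congr rfl fun i _ => by ring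
  rw [mul_sub, two_mul (∑ i ∈ T, w i * _), hdiag]
  exact ((hcross.mul_left 2).sub (hleft.add hright)).congr_fun fun p => by ring

lemma Qform_eq_sum {f : ℕ → ℝ} {T : Finset ℕ} (hf : ∀ n ∉ T, f n = 0) (σ : ℝ) :
    Qform σ f = ∑ m ∈ T, ∑ n ∈ T, Kker σ m n * f m * f n := by
  rw [Qform, tsum_eq_sum fun m hm => by simp [hf m hm]]
  exact Finset.sum_congr rfl fun m _ => tsum_eq_sum fun n hn => by simp [hf n hn]

lemma ite_off_diagonal_eq {M : Type*} [Zero M] {f : ℕ → ℕ → M} (hdiag : ∀ n, f n n = 0)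
    (hleft : ∀ n, f 0 n = 0) (hright : ∀ m, f m 0 = 0) (p : ℕ × ℕ) :
    (if 1 ≤ p.1 ∧ 1 ≤ p.2 ∧ p.1 ≠ p.2 then f p.1 p.2 else 0) = f p.1 p.2 := by
  refine ite_eq_left_iff.2 fun hp => ?_
  obtain h | h | h : p.1 = 0 ∨ p.2 = 0 ∨ p.1 = p.2 := by omega
  · rw [h, hleft]
  · rw [h, hright]
  · rw [h, hdiag]

end HalfLine

theorem stmt_3_general (σ α : ℝ) (hσ0 : 0 < σ) (hα3 : α < 3 / 2) (hα1 : σ < α)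
    (φ : ℕ → ℝ) (hφ0 : φ 0 = 0) (hφ : (Function.support φ).Finite) :
    Summable (fun p : ℕ × ℕ =>
      if 1 ≤ p.1 ∧ 1 ≤ p.2 ∧ p.1 ≠ p.2 then
        (-(Kker σ p.1 p.2)) * Riesz α p.1 * Riesz α p.2 *
          (φ p.2 / Riesz α p.2 - φ p.1 / Riesz α p.1) ^ 2
      else 0) ∧
    Qform σ φ - (∑' n : ℕ, Wweight σ α n * (φ n) ^ 2) =
      (1/2) * ∑' p : ℕ × ℕ,
        (if 1 ≤ p.1 ∧ 1 ≤ p.2 ∧ p.1 ≠ p.2 then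
          (-(Kker σ p.1 p.2)) * Riesz α p.1 * Riesz α p.2 *
            (φ p.2 / Riesz α p.2 - φ p.1 / Riesz α p.1) ^ 2
        else 0) := by
  have hzero (n : ℕ) (hn : n ∉ hφ.toFinset) : φ n = 0 := by simpa using hn
  have hone (n : ℕ) (hn : φ n ≠ 0) : 1 ≤ n := Nat.one_le_iff_ne_zero.2 fun h => hn (h ▸ hφ0)
  have hu (n : ℕ) : Riesz α n * (φ n / Riesz α n) = φ n := by
    by_cases hn : φ n = 0
    · simp [hn]
    · exact mul_div_cancel₀ _ (HalfLine.Riesz_pos (hσ0.trans hα1) hα3 (hone n hn)).ne'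
  have hsum := HalfLine.hasSum_ground_state (T := hφ.toFinset) (u := fun n => φ n / Riesz α n)
    (HalfLine.Kker_comm σ)
    (fun n hn => HalfLine.hasSum_Kker_mul_Riesz hσ0 hα1 hα3 (hone n (by simpa using hn)))
    (fun n hn => by simp [hzero n hn])
  have hW : ∑' n, Wweight σ α n * φ n ^ 2 = ∑ n ∈ hφ.toFinset, Wweight σ α n * φ n ^ 2 :=
    tsum_eq_sum fun n hn => by simp [hzero n hn]
  simp only [hu, ← HalfLine.Qform_eq_sum hzero, ← hW] at hsum
  have hrestrict := hsum.congr_fun fun p : ℕ × ℕ =>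
    HalfLine.ite_off_diagonal_eq (f := fun m n => -Kker σ m n * Riesz α m * Riesz α n *
      (φ n / Riesz α n - φ m / Riesz α m) ^ 2)
      (by simp) (by simp [HalfLine.Kker_zero_left]) (by simp [HalfLine.Kker_zero_right]) p
  refine ⟨hrestrict.summable, ?_⟩
  rw [hrestrict.tsum_eq]
  ring

/-- Ground state representation of `(-Δ_ℕ)^σ - W_{α,σ}`. -/
theorem stmt_3 (σ α : ℝ) (hσ0 : 0 < σ) (hσ1 : σ ≤ 1)
    (hα0 : 0 < α) (hα3 : α < 3/2) (hα1 : σ < α) (hα2 : α < 1 + σ)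
    (φ : ℕ → ℝ) (hφ0 : φ 0 = 0) (hφ : (Function.support φ).Finite) :
    Summable (fun p : ℕ × ℕ =>
      if 1 ≤ p.1 ∧ 1 ≤ p.2 ∧ p.1 ≠ p.2 then
        (-(Kker σ p.1 p.2)) * Riesz α p.1 * Riesz α p.2 *
          (φ p.2 / Riesz α p.2 - φ p.1 / Riesz α p.1) ^ 2
      else 0) ∧
    Qform σ φ - (∑' n : ℕ, Wweight σ α n * (φ n) ^ 2) =
      (1/2) * ∑' p : ℕ × ℕ,
        (if 1 ≤ p.1 ∧ 1 ≤ p.2 ∧ p.1 ≠ p.2 then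
          (-(Kker σ p.1 p.2)) * Riesz α p.1 * Riesz α p.2 *
            (φ p.2 / Riesz α p.2 - φ p.1 / Riesz α p.1) ^ 2
        else 0) :=
  stmt_3_general σ α hσ0 hα3 hα1 φ hφ0 hφ
end

section
/- Let σ ∈ (0,1]. Then for all integers m,n ≥ 1 with m ≠ n, the off-diagonal kernel entries are nonpositive: K^σ_{m,n} ≤ 0. -/
open Real Filter

/-!
By odd reflection, `(-Δ_ℕ)^σ` is the difference of the translates `c (m - n)` and `c (m + n)` of the
even convolution kernel `c` of `(-Δ_ℤ)^σ`. Since `c (k + 1) / c k = (k - σ) / (σ + k + 1)`, where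
`c 0 > 0`, the first step makes `c 1 ≤ 0`, and from there on the ratios lie in `[0, 1]`, so that `c`
stays nonpositive and is increasing. The claim is then `c |m - n| ≤ c (m + n)`.
-/

theorem rbinom_sub_right (a b : ℝ) : rbinom a (a - b) = rbinom a b := by
  rw [rbinom, rbinom, sub_sub_cancel, mul_comm (Gamma (b + 1))]

theorem rbinom_pos {a b : ℝ} (ha : -1 < a) (hb : -1 < b) (hba : b < a + 1) : 0 < rbinom a b := by
  have hΓa : 0 < Gamma (a + 1) := Gamma_pos_of_pos (by linarith)
  have hΓb : 0 < Gamma (b + 1) := Gamma_pos_of_pos (by linarith)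
  have hΓab : 0 < Gamma (a - b + 1) := Gamma_pos_of_pos (by linarith)
  exact div_pos hΓa (mul_pos hΓb hΓab)

theorem rbinom_add_one_right (a : ℝ) {b : ℝ} (hb : b + 1 ≠ 0) :
    rbinom a (b + 1) = rbinom a b * ((a - b) / (b + 1)) := by
  have hΓb : Gamma (b + 1 + 1) = (b + 1) * Gamma (b + 1) := Gamma_add_one hb
  rw [rbinom, rbinom, hΓb, show a - (b + 1) + 1 = a - b by ring]
  -- At poles of `Γ` the conventions `Γ (-j) = 0` and `x / 0 = 0` give `1 / Γ` its true value `0`.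
  rcases eq_or_ne (a - b) 0 with hab | hab
  · simp [hab]
  · rw [Gamma_add_one hab]
    field_simp

/-- The convolution kernel `k ↦ (-1)^k binom(2σ, σ + k)` of the fractional Laplacian `(-Δ_ℤ)^σ` on
the whole line `ℤ`, from which the kernel on the half-line arises by reflection. -/
noncomputable def intKer (σ : ℝ) (k : ℤ) : ℝ :=
  (-1 : ℝ) ^ k * rbinom (2 * σ) (σ + k)

theorem intKer_neg (σ : ℝ) (k : ℤ) : intKer σ (-k) = intKer σ k := by
  have hreflect : σ + ((-k : ℤ) : ℝ) = 2 * σ - (σ + k) := by push_cast; ring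
  rw [intKer, intKer, hreflect, rbinom_sub_right, zpow_neg, ← inv_zpow, inv_neg_one]

theorem intKer_abs (σ : ℝ) (k : ℤ) : intKer σ |k| = intKer σ k := by
  rcases abs_choice k with h | h <;> simp only [h, intKer_neg]

theorem Kker_eq_intKer_sub_intKer (σ : ℝ) (m n : ℕ) :
    Kker σ m n = intKer σ (m - n) - intKer σ (m + n) := by
  have hsign_add : (-1 : ℝ) ^ ((m : ℤ) + n) = (-1) ^ (m + n) := by
    rw [← Nat.cast_add, zpow_natCast]
  have hsign_sub : (-1 : ℝ) ^ ((m : ℤ) - n) = (-1) ^ (m + n) := by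
    rw [sub_eq_add_neg, zpow_add₀ (by norm_num), zpow_neg, ← inv_zpow, inv_neg_one, pow_add,
      zpow_natCast, zpow_natCast]
  rw [Kker, intKer, intKer, hsign_add, hsign_sub, ← mul_sub]
  push_cast
  rw [← add_sub_assoc, ← add_assoc]

theorem intKer_add_one {σ : ℝ} {k : ℤ} (h : σ + k + 1 ≠ 0) :
    intKer σ (k + 1) = intKer σ k * ((k - σ) / (σ + k + 1)) := by
  have hshift : σ + ((k + 1 : ℤ) : ℝ) = σ + k + 1 := by push_cast; ring
  rw [intKer, intKer, hshift, rbinom_add_one_right _ h, zpow_add_one₀ (by norm_num)]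
  ring

theorem intKer_zero_pos {σ : ℝ} (hσ : -1 / 2 < σ) : 0 < intKer σ 0 := by
  have hbinom : 0 < rbinom (2 * σ) σ := rbinom_pos (by linarith) (by linarith) (by linarith)
  simpa [intKer] using hbinom

theorem intKer_nonpos {σ : ℝ} (hσ0 : 0 ≤ σ) (hσ1 : σ ≤ 1) {k : ℤ} (hk : 1 ≤ k) :
    intKer σ k ≤ 0 := by
  induction k, hk using Int.leInduction with
  | base =>
    have hstep : intKer σ 1 = intKer σ 0 * (-σ / (σ + 1)) := by
      simpa using intKer_add_one (σ := σ) (k := 0) (by norm_num; positivity)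
    rw [hstep]
    exact mul_nonpos_of_nonneg_of_nonpos (intKer_zero_pos (by linarith)).le
      (div_nonpos_of_nonpos_of_nonneg (by linarith) (by linarith))
  | succ k hk ih =>
    have hk' : (1 : ℝ) ≤ k := by exact_mod_cast hk
    rw [intKer_add_one (by positivity)]
    exact mul_nonpos_of_nonpos_of_nonneg ih (div_nonneg (by linarith) (by linarith))

theorem monotoneOn_intKer {σ : ℝ} (hσ0 : 0 ≤ σ) (hσ1 : σ ≤ 1) :
    MonotoneOn (intKer σ) (Set.Ici 1) := by
  refine monotoneOn_of_le_add_one Set.ordConnected_Ici fun k _ (hk : 1 ≤ k) _ ↦ ?_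
  have hden : 0 < σ + k + 1 := by positivity
  have hratio : (k - σ) / (σ + k + 1) ≤ 1 := (div_le_one hden).mpr (by linarith)
  rw [intKer_add_one hden.ne']
  simpa only [mul_one] using mul_le_mul_of_nonpos_left hratio (intKer_nonpos hσ0 hσ1 hk)

/-- Off-diagonal entries of the kernel of `(-Δ_ℕ)^σ` are nonpositive for `σ ∈ (0,1]`. -/
theorem stmt_4 (σ : ℝ) (hσ0 : 0 < σ) (hσ1 : σ ≤ 1)
    (m n : ℕ) (hm : 1 ≤ m) (hn : 1 ≤ n) (hmn : m ≠ n) :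
    Kker σ m n ≤ 0 := by
  have hdist : (1 : ℤ) ≤ |(m : ℤ) - n| := Int.one_le_abs (sub_ne_zero.mpr (by exact_mod_cast hmn))
  have hle : |(m : ℤ) - n| ≤ m + n := abs_le.mpr ⟨by omega, by omega⟩
  rw [Kker_eq_intKer_sub_intKer, ← intKer_abs, sub_nonpos]
  exact monotoneOn_intKer hσ0.le hσ1 hdist (hdist.trans hle) hle
end

section
/- Let σ, α ∈ (0,3/2) with σ < α < 1+σ. Then for every integer n ≥ 1 the series Σ_{m≥1} K^σ_{m,n}·I_α(m) converges absolutely and Σ_{m≥1} K^σ_{m,n}·I_α(m) = I_{α−σ}(n); that is, (−Δ_ℕ)^σ I_α = I_{α−σ}. In particular, I_α is a strictly positive supersolution of (−Δ_ℕ)^σ u = 0 on ℕ. -/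
open Real Filter

/-! Dougall's `₅F₄` summation contains the composition rule for Riesz potentials at the first site:
`∑ₘ I_β(m) I_γ(m)` is a constant multiple of `I_{β+γ}(1)`. The first column of the kernel is
`K^σ_{m,1} = √(2/π) I_{-σ}(m)`, so this is the case `n = 1` of the theorem. Both
`(-Δ_ℕ)^{σ+1} = (-Δ_ℕ) (-Δ_ℕ)^σ` (Pascal's rule) and `I_{β-1} = (-Δ_ℕ) I_β` express the values at
`n + 2` through those at `n` and `n + 1`, and the remaining columns follow by induction on `n`,
for all `σ` simultaneously.

Dougall's sum with parameter `d` is compared with the one with `d - 1` by telescoping. Lowering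
`d` to `-∞` makes the sum an explicit product of Gamma quotients times a limit that does not depend
on `d`; the case `d = 0`, where the series has one term, identifies this limit.
-/

open Asymptotics Finset Topology

lemma inv_Gamma_eq_mul_inv_Gamma_add_one (s : ℝ) : (Gamma s)⁻¹ = s * (Gamma (s + 1))⁻¹ := by
  rcases eq_or_ne s 0 with rfl | hs
  · rw [Gamma_zero, inv_zero, zero_mul]
  · rw [Gamma_add_one hs, mul_inv, mul_inv_cancel_left₀ hs]

lemma tendsto_inv_GammaSeq (x : ℝ) :
    Tendsto (fun n ↦ (GammaSeq x n)⁻¹) atTop (𝓝 (Gamma x)⁻¹) := by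
  by_cases h : Gamma x = 0
  · obtain ⟨m, rfl⟩ := (Gamma_eq_zero_iff x).1 h
    rw [h, inv_zero]
    refine tendsto_const_nhds.congr' ?_
    filter_upwards [eventually_ge_atTop m] with n hn
    rw [GammaSeq, prod_eq_zero (mem_range.2 (Nat.lt_succ_of_le hn)) (neg_add_cancel _), div_zero,
      inv_zero]
  · exact (GammaSeq_tendsto_Gamma x).inv₀ h

lemma tendsto_natCast_add_div (x y : ℝ) :
    Tendsto (fun n : ℕ ↦ (x + n) / (y + n)) atTop (𝓝 1) := by
  simpa using tendsto_add_mul_div_add_mul_atTop_nhds x y 1 (one_ne_zero (α := ℝ))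

lemma isBigO_add_natCast (x : ℝ) : (fun n : ℕ ↦ x + n) =O[atTop] fun n : ℕ ↦ (n : ℝ) :=
  ((isLittleO_const_id_atTop x).natCast_atTop.isBigO).add (isBigO_refl _ _)

/-! ### Ratios of rising factorials -/

/-- The ratio of rising factorials `(x)ₖ / (y)ₖ`, the building block of hypergeometric terms. -/
noncomputable def pochRatio (x y : ℝ) (k : ℕ) : ℝ := ∏ i ∈ range k, (x + i) / (y + i)

section pochRatio

variable {x y : ℝ}

@[simp] lemma pochRatio_zero (x y : ℝ) : pochRatio x y 0 = 1 := prod_range_zero _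

lemma pochRatio_succ (x y : ℝ) (k : ℕ) :
    pochRatio x y (k + 1) = pochRatio x y k * ((x + k) / (y + k)) :=
  prod_range_succ _ _

lemma pochRatio_succ_left (x y : ℝ) (k : ℕ) :
    pochRatio x y (k + 1) = x / (y + k) * pochRatio (x + 1) y k := by
  simp only [pochRatio, prod_div_distrib, prod_range_succ' (fun i : ℕ ↦ x + i),
    prod_range_succ (fun i : ℕ ↦ y + i), Nat.cast_add, Nat.cast_one, Nat.cast_zero, add_zero,
    add_assoc, add_comm (1 : ℝ)]
  rw [mul_div_mul_comm, mul_comm]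

lemma pochRatio_add_one_right (x : ℝ) (hy : 0 < y) (k : ℕ) :
    pochRatio x (y + 1) k = y / (y + k) * pochRatio x y k := by
  induction k with
  | zero => simp [hy.ne']
  | succ k ih =>
    rw [pochRatio_succ, ih, pochRatio_succ]
    push_cast
    field_simp
    ring

lemma pochRatio_zero_left_succ (y : ℝ) (k : ℕ) : pochRatio 0 y (k + 1) = 0 := by
  simp [pochRatio_succ_left]

lemma pochRatio_self (hy : 0 < y) (k : ℕ) : pochRatio y y k = 1 :=
  prod_eq_one fun i _ ↦ div_self (by positivity)

lemma pochRatio_two_one (k : ℕ) : pochRatio 2 1 k = k + 1 := by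
  have h := pochRatio_succ 1 1 k
  rw [pochRatio_succ_left, pochRatio_self one_pos, one_add_one_eq_two] at h
  field_simp at h
  linarith

lemma abs_pochRatio_le_one (hx : -y ≤ x) (hxy : x ≤ y) (k : ℕ) : |pochRatio x y k| ≤ 1 := by
  rw [pochRatio, abs_prod]
  refine prod_le_one (fun _ _ ↦ abs_nonneg _) fun i _ ↦ ?_
  have : (0 : ℝ) ≤ i := i.cast_nonneg
  rw [abs_div, abs_of_nonneg (by linarith : 0 ≤ y + i)]
  exact div_le_one_of_le₀ (abs_le.2 ⟨by linarith, by linarith⟩) (by linarith)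

lemma Gamma_add_natCast_div (hx : 0 < x) (hy : 0 < y) (k : ℕ) :
    Gamma (x + k) / Gamma (y + k) = Gamma x / Gamma y * pochRatio x y k := by
  induction k with
  | zero => simp
  | succ k ih =>
    rw [pochRatio_succ, ← mul_assoc, ← ih, Nat.cast_succ, ← add_assoc, ← add_assoc,
      Gamma_add_one (by positivity), Gamma_add_one (by positivity), mul_div_mul_comm, mul_comm]

lemma tendsto_pochRatio_mul_rpow (x y : ℝ) :
    Tendsto (fun n : ℕ ↦ pochRatio x y n * (n : ℝ) ^ (y - x)) atTop (𝓝 (Gamma y / Gamma x)) := by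
  have h := ((GammaSeq_tendsto_Gamma y).mul (tendsto_inv_GammaSeq x)).mul
    (tendsto_natCast_add_div y x)
  rw [mul_one, ← div_eq_mul_inv] at h
  refine h.congr' ?_
  obtain ⟨N, hN⟩ := exists_nat_gt (|x| + |y|)
  filter_upwards [eventually_gt_atTop 0, eventually_ge_atTop N] with n hn hNn
  have hn' : (0 : ℝ) < n := by exact_mod_cast hn
  have hNn' : (N : ℝ) ≤ n := by exact_mod_cast hNn
  have hx : x + n ≠ 0 := by linarith [neg_abs_le x, abs_nonneg y]
  have hy : y + n ≠ 0 := by linarith [neg_abs_le y, abs_nonneg x]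
  rw [GammaSeq, GammaSeq, rpow_sub hn', pochRatio, prod_div_distrib, prod_range_succ,
    prod_range_succ]
  field_simp

lemma tendsto_pochRatio_mul_pochRatio {x y x' y' : ℝ} (h : x + x' = y + y') :
    Tendsto (fun n ↦ pochRatio x y n * pochRatio x' y' n) atTop
      (𝓝 (Gamma y / Gamma x * (Gamma y' / Gamma x'))) := by
  refine ((tendsto_pochRatio_mul_rpow x y).mul (tendsto_pochRatio_mul_rpow x' y')).congr' ?_
  filter_upwards [eventually_gt_atTop 0] with n hn
  rw [mul_mul_mul_comm, ← rpow_add (by exact_mod_cast hn), show y - x + (y' - x') = 0 by linarith,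
    rpow_zero, mul_one]

lemma isBigO_pochRatio (x y : ℝ) :
    pochRatio x y =O[atTop] fun n : ℕ ↦ (n : ℝ) ^ (x - y) := by
  refine (((tendsto_pochRatio_mul_rpow x y).isBigO_one ℝ).mul
    (isBigO_refl (fun n : ℕ ↦ (n : ℝ) ^ (x - y)) atTop)).congr' ?_ (by simp)
  filter_upwards [eventually_gt_atTop 0] with n hn
  rw [mul_assoc, ← rpow_add (by exact_mod_cast hn)]
  simp

lemma tendsto_pochRatio_sub_natCast (x y : ℝ) (k : ℕ) :
    Tendsto (fun n : ℕ ↦ pochRatio (x - n) (y + n) k) atTop (𝓝 ((-1) ^ k)) := by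
  have hfactor (i : ℕ) : Tendsto (fun n : ℕ ↦ (x - n + i) / (y + n + i)) atTop (𝓝 (-1)) := by
    refine ((tendsto_natCast_add_div (-(x + i)) (y + i)).neg).congr fun n ↦ ?_
    rw [← neg_div]
    ring_nf
  simpa only [pochRatio, prod_const, card_range] using
    tendsto_finsetProd (range k) fun i _ ↦ hfactor i

end pochRatio

/-! ### The Dougall summation -/

/-- The general term of Dougall's very-well-poised series `₅F₄(1)` with parameters
`a, 1 + a/2, b, c, d`; the factor `(1 + a/2)ₖ / (a/2)ₖ` is written as `(a + 2k) / a`. -/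
noncomputable def dougallTerm (a b c d : ℝ) (k : ℕ) : ℝ :=
  (a + 2 * k) / a * (pochRatio a 1 k * pochRatio b (1 + a - b) k *
    pochRatio c (1 + a - c) k * pochRatio d (1 + a - d) k)

/-- Dougall's closed form for the sum of `dougallTerm a b c d`. -/
noncomputable def dougallValue (a b c d : ℝ) : ℝ :=
  Gamma (1 + a - b) * Gamma (1 + a - c) * Gamma (1 + a - d) * Gamma (1 + a - b - c - d) /
    (Gamma (1 + a) * Gamma (1 + a - b - c) * Gamma (1 + a - b - d) * Gamma (1 + a - c - d))

/-- The indefinite sum of the combination of `dougallTerm a b c (d - 1)` and `dougallTerm a b c d`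
that telescopes; see `sum_range_succ_dougallTerm`. -/
noncomputable def dougallPrimitive (a b c d : ℝ) (k : ℕ) : ℝ :=
  (a + k) * (b + k) * (c + k) / a * (pochRatio a 1 k * pochRatio b (1 + a - b) k *
    pochRatio c (1 + a - c) k * pochRatio d (1 + a - d + 1) k)

section Dougall

variable {a b c d : ℝ}

lemma isBigO_pow_mul_pochRatio {f : ℕ → ℝ} {p : ℕ} (hf : f =O[atTop] fun n : ℕ ↦ (n : ℝ) ^ p)
    (a b c d e : ℝ) :
    (fun n ↦ f n * (pochRatio a 1 n * pochRatio b (1 + a - b) n * pochRatio c (1 + a - c) n *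
      pochRatio d e n)) =O[atTop] fun n : ℕ ↦ (n : ℝ) ^ (2 * (b + c) - a - 3 + d - e + p) := by
  refine (hf.mul ((((isBigO_pochRatio a 1).mul (isBigO_pochRatio b (1 + a - b))).mul
    (isBigO_pochRatio c (1 + a - c))).mul (isBigO_pochRatio d e))).congr' .rfl ?_
  filter_upwards [eventually_gt_atTop 0] with n hn
  have hn' : (0 : ℝ) < n := by exact_mod_cast hn
  rw [← rpow_add hn', ← rpow_add hn', ← rpow_add hn', ← rpow_natCast, ← rpow_add hn']
  ring_nf

lemma isBigO_dougallTerm (a b c d : ℝ) :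
    dougallTerm a b c d =O[atTop] fun n : ℕ ↦ (n : ℝ) ^ (2 * (b + c + d) - 2 * a - 3) := by
  have hlin : (fun n : ℕ ↦ (a + 2 * n) / a) =O[atTop] fun n : ℕ ↦ (n : ℝ) ^ 1 :=
    ((isBigO_add_natCast (a / 2)).const_mul_left (2 / a)).congr (fun n ↦ by ring)
      fun n ↦ (pow_one _).symm
  exact (isBigO_pow_mul_pochRatio hlin a b c d _).congr_right fun n ↦ by push_cast; ring_nf

lemma isBigO_dougallPrimitive (a b c d : ℝ) :
    dougallPrimitive a b c d =O[atTop]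
      fun n : ℕ ↦ (n : ℝ) ^ (2 * (b + c + d) - 2 * a - 2) := by
  have hcubic : (fun n : ℕ ↦ (a + n) * (b + n) * (c + n) / a) =O[atTop]
      fun n : ℕ ↦ (n : ℝ) ^ 3 :=
    ((((isBigO_add_natCast a).mul (isBigO_add_natCast b)).mul
      (isBigO_add_natCast c)).const_mul_left a⁻¹).congr (fun n ↦ by ring) fun n ↦ by ring
  exact (isBigO_pow_mul_pochRatio hcubic a b c d _).congr_right fun n ↦ by push_cast; ring_nf

lemma summable_dougallTerm (h : b + c + d < 1 + a) : Summable (dougallTerm a b c d) :=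
  summable_of_isBigO_nat (summable_nat_rpow.2 (by linarith)) (isBigO_dougallTerm a b c d)

lemma sum_range_succ_dougallTerm (ha : a ≠ 0) (hb : b < 1 + a) (hc : c < 1 + a) (hd : d < 1 + a)
    (k : ℕ) :
    ∑ j ∈ range (k + 1), ((1 + a - b - d) * (1 + a - c - d) * dougallTerm a b c (d - 1) j -
      (1 + a - d) * (1 + a - b - c - d) * dougallTerm a b c d j) = dougallPrimitive a b c d k := by
  induction k with
  | zero =>
    simp only [zero_add, sum_range_one, dougallTerm, dougallPrimitive, pochRatio_zero,
      Nat.cast_zero]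
    field_simp
    ring
  | succ k ih =>
    have hb' : 1 + a - b + k ≠ 0 := by linarith [k.cast_nonneg (α := ℝ)]
    have hc' : 1 + a - c + k ≠ 0 := by linarith [k.cast_nonneg (α := ℝ)]
    have hd' : 1 + a - d + k ≠ 0 := by linarith [k.cast_nonneg (α := ℝ)]
    have hd'' : 1 + a - d + 1 + k ≠ 0 := by linarith [k.cast_nonneg (α := ℝ)]
    have hd₀ : 1 + a - d ≠ 0 := by linarith
    have hk : (1 : ℝ) + k ≠ 0 := by positivity
    rw [sum_range_succ, ih, dougallTerm, dougallTerm, dougallPrimitive, dougallPrimitive,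
      show 1 + a - (d - 1) = 1 + a - d + 1 by ring, pochRatio_succ_left (d - 1), sub_add_cancel]
    simp only [pochRatio_succ _ _ k, pochRatio_add_one_right d (sub_pos.2 hd)]
    push_cast
    field_simp
    ring

lemma dougallTerm_swap (a b c d : ℝ) : dougallTerm a b c d = dougallTerm a d c b := by
  funext k
  unfold dougallTerm
  ring

lemma dougallValue_swap (a b c d : ℝ) : dougallValue a b c d = dougallValue a d c b := by
  rw [dougallValue, dougallValue, sub_right_comm (1 + a) d c, sub_right_comm (1 + a) d b,
    sub_right_comm (1 + a) c b, show 1 + a - c - d - b = 1 + a - b - c - d by ring]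
  ring

lemma tsum_dougallTerm_sub_one (ha : a ≠ 0) (hb : b < 1 + a) (hc : c < 1 + a) (hd : d < 1 + a)
    (h : b + c + d < 1 + a) :
    (1 + a - b - d) * (1 + a - c - d) * ∑' k, dougallTerm a b c (d - 1) k =
      (1 + a - d) * (1 + a - b - c - d) * ∑' k, dougallTerm a b c d k := by
  have hlowered : Summable (dougallTerm a b c (d - 1)) := summable_dougallTerm (by linarith)
  have hsum := (hlowered.hasSum.mul_left ((1 + a - b - d) * (1 + a - c - d))).sub
    ((summable_dougallTerm h).hasSum.mul_left ((1 + a - d) * (1 + a - b - c - d)))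
  have hpartial := (hsum.tendsto_sum_nat.comp (tendsto_add_atTop_nat 1)).congr
    fun k ↦ sum_range_succ_dougallTerm ha hb hc hd k
  have hprim : Tendsto (dougallPrimitive a b c d) atTop (𝓝 0) := by
    refine (isBigO_dougallPrimitive a b c d).trans_tendsto ?_
    rw [show 2 * (b + c + d) - 2 * a - 2 = -(2 * (1 + a - b - c - d)) by ring]
    exact (tendsto_rpow_neg_atTop (by linarith)).comp tendsto_natCast_atTop_atTop
  exact sub_eq_zero.1 (tendsto_nhds_unique hpartial hprim)

lemma dougallValue_sub_one (hd : d < 1 + a) (h : b + c + d < 1 + a) :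
    (1 + a - b - d) * (1 + a - c - d) * dougallValue a b c (d - 1) =
      (1 + a - d) * (1 + a - b - c - d) * dougallValue a b c d := by
  simp only [dougallValue, div_eq_mul_inv, mul_inv]
  rw [inv_Gamma_eq_mul_inv_Gamma_add_one (1 + a - b - d),
    inv_Gamma_eq_mul_inv_Gamma_add_one (1 + a - c - d),
    show 1 + a - (d - 1) = 1 + a - d + 1 by ring,
    show 1 + a - b - c - (d - 1) = 1 + a - b - c - d + 1 by ring,
    show 1 + a - b - (d - 1) = 1 + a - b - d + 1 by ring,
    show 1 + a - c - (d - 1) = 1 + a - c - d + 1 by ring,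
    Gamma_add_one (by linarith), Gamma_add_one (by linarith)]
  ring

lemma tsum_dougallTerm_eq_sub_natCast (ha : a ≠ 0) (hb : b < 1 + a) (hc : c < 1 + a)
    (hd : d < 1 + a) (h : b + c + d < 1 + a) (N : ℕ) :
    ∑' k, dougallTerm a b c d k = (∑' k, dougallTerm a b c (d - N) k) *
      (pochRatio (1 + a - b - d) (1 + a - d) N *
        pochRatio (1 + a - c - d) (1 + a - b - c - d) N) := by
  induction N with
  | zero => simp
  | succ N ih =>
    have : (0 : ℝ) ≤ N := N.cast_nonneg
    have hstep := tsum_dougallTerm_sub_one (d := d - N) ha hb hc (by linarith) (by linarith)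
    have hd' : 1 + a - d + N ≠ 0 := by linarith
    have hbcd : 1 + a - b - c - d + N ≠ 0 := by linarith
    rw [ih, pochRatio_succ, pochRatio_succ, Nat.cast_succ, ← sub_sub]
    field_simp
    linear_combination -(pochRatio (1 + a - b - d) (1 + a - d) N *
      pochRatio (1 + a - c - d) (1 + a - b - c - d) N) * hstep

lemma tendsto_tsum_dougallTerm_sub_natCast (ha : -1 < a) (hbc : 2 * (b + c) < 1 + a) (d : ℝ) :
    Tendsto (fun N : ℕ ↦ ∑' k, dougallTerm a b c (d - N) k) atTop
      (𝓝 (∑' k : ℕ, (a + 2 * k) / a * (pochRatio a 1 k * pochRatio b (1 + a - b) k *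
        pochRatio c (1 + a - c) k * (-1) ^ k))) := by
  have hbound := (summable_dougallTerm (a := a) (b := b) (c := c) (d := (1 + a) / 2)
    (by linarith)).norm
  refine tendsto_tsum_of_dominated_convergence hbound (fun k ↦ ?_) ?_
  · have h := tendsto_pochRatio_sub_natCast d (1 + a - d) k
    simp only [dougallTerm, ← sub_add]
    exact (h.const_mul _).const_mul _
  · obtain ⟨N₀, hN₀⟩ := exists_nat_ge (d - (1 + a) / 2)
    filter_upwards [eventually_ge_atTop N₀] with N hN k
    have hN' : (N₀ : ℝ) ≤ N := by exact_mod_cast hN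
    have hself : pochRatio ((1 + a) / 2) (1 + a - (1 + a) / 2) k = 1 := by
      rw [sub_half]
      exact pochRatio_self (by linarith) k
    have hle := abs_pochRatio_le_one (x := d - N) (y := 1 + a - (d - N)) (by linarith)
      (by linarith) k
    rw [dougallTerm, dougallTerm, hself, mul_one, ← mul_assoc, norm_mul]
    exact mul_le_of_le_one_right (norm_nonneg _) hle

lemma tsum_dougallTerm_zero (ha : a ≠ 0) (b c : ℝ) : ∑' k, dougallTerm a b c 0 k = 1 := by
  rw [tsum_eq_single 0]
  · simp [dougallTerm, ha]
  · intro k hk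
    obtain ⟨j, rfl⟩ := Nat.exists_eq_succ_of_ne_zero hk
    simp [dougallTerm, pochRatio_zero_left_succ]

lemma tsum_dougallTerm_of_two_mul_add_lt (ha : a ≠ 0) (ha' : -1 < a) (hb : b < 1 + a)
    (hc : c < 1 + a) (hd : d < 1 + a) (h : b + c + d < 1 + a) (hbc : 2 * (b + c) < 1 + a) :
    ∑' k, dougallTerm a b c d k = dougallValue a b c d := by
  obtain ⟨L, hL⟩ : ∃ L, ∀ d, Tendsto (fun N : ℕ ↦ ∑' k, dougallTerm a b c (d - N) k) atTop (𝓝 L) :=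
    ⟨_, tendsto_tsum_dougallTerm_sub_natCast ha' hbc⟩
  have hfactor {d : ℝ} (hd : d < 1 + a) (h : b + c + d < 1 + a) :
      ∑' k, dougallTerm a b c d k = L * (Gamma (1 + a - d) / Gamma (1 + a - b - d) *
        (Gamma (1 + a - b - c - d) / Gamma (1 + a - c - d))) := by
    have hprod := tendsto_pochRatio_mul_pochRatio
      (show 1 + a - b - d + (1 + a - c - d) = 1 + a - d + (1 + a - b - c - d) by ring)
    exact tendsto_nhds_unique (tendsto_const_nhds.congr
      (tsum_dougallTerm_eq_sub_natCast ha hb hc hd h)) ((hL d).mul hprod)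
  have hzero := hfactor (d := 0) (by linarith) (by linarith)
  rw [tsum_dougallTerm_zero ha] at hzero
  simp only [sub_zero] at hzero
  have hΓ : Gamma (1 + a) ≠ 0 := (Gamma_pos_of_pos (by linarith)).ne'
  have hΓb : Gamma (1 + a - b) ≠ 0 := (Gamma_pos_of_pos (by linarith)).ne'
  have hΓc : Gamma (1 + a - c) ≠ 0 := (Gamma_pos_of_pos (by linarith)).ne'
  have hΓbc : Gamma (1 + a - b - c) ≠ 0 := (Gamma_pos_of_pos (by linarith)).ne'
  have hLval : L = Gamma (1 + a - b) * Gamma (1 + a - c) /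
      (Gamma (1 + a) * Gamma (1 + a - b - c)) := by
    field_simp at hzero ⊢
    linarith
  rw [hfactor hd h, hLval, dougallValue]
  ring

lemma tsum_dougallTerm_of_sub_natCast (ha : a ≠ 0) (hb : b < 1 + a) (hc : c < 1 + a)
    (hd : d < 1 + a) (h : b + c + d < 1 + a) (N : ℕ)
    (hN : ∑' k, dougallTerm a b c (d - N) k = dougallValue a b c (d - N)) :
    ∑' k, dougallTerm a b c d k = dougallValue a b c d := by
  induction N with
  | zero => simpa using hN
  | succ N ih =>
    have : (0 : ℝ) ≤ N := N.cast_nonneg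
    have hd' : d - N < 1 + a := by linarith
    have hbcd : b + c + (d - N) < 1 + a := by linarith
    have hfactor : (1 + a - (d - N)) * (1 + a - b - c - (d - N)) ≠ 0 :=
      mul_ne_zero (by linarith) (by linarith)
    rw [Nat.cast_succ, ← sub_sub] at hN
    refine ih (mul_left_cancel₀ hfactor ?_)
    rw [← tsum_dougallTerm_sub_one ha hb hc hd' hbcd, ← dougallValue_sub_one hd' hbcd, hN]

theorem hasSum_dougallTerm (ha : a ≠ 0) (ha' : -1 < a) (hb : b < 1 + a) (hc : c < 1 + a)
    (hd : d < 1 + a) (h : b + c + d < 1 + a) :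
    HasSum (dougallTerm a b c d) (dougallValue a b c d) := by
  obtain ⟨N, hN⟩ := exists_nat_gt (c + d - (1 + a) / 2)
  have : (0 : ℝ) ≤ N := N.cast_nonneg
  have hshift : ∑' k, dougallTerm a b c (d - N) k = dougallValue a b c (d - N) := by
    rw [dougallTerm_swap, dougallValue_swap]
    exact tsum_dougallTerm_of_two_mul_add_lt ha ha' (by linarith) hc hb (by linarith) (by linarith)
  rw [← tsum_dougallTerm_of_sub_natCast ha hb hc hd h N hshift]
  exact (summable_dougallTerm h).hasSum

end Dougall

/-! ### Riesz potentials -/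

/-- The Riesz potential `I_β`, with `Γ(n + β - 1) / Γ(β)` written as a rising factorial so that the
formula stays meaningful for every `β < 3 / 2`, including the nonpositive integers. It vanishes at
`n = 0`, which encodes the Dirichlet condition of the discrete half-line. -/
noncomputable def regRiesz (β : ℝ) (n : ℕ) : ℝ :=
  4 / (4 ^ β * √2) * (Gamma (3 / 2 - β) / Gamma (3 - β)) * (n * pochRatio β (3 - β) (n - 1))

section regRiesz

variable {β γ : ℝ}

@[simp] lemma regRiesz_zero (β : ℝ) : regRiesz β 0 = 0 := by simp [regRiesz]

lemma regRiesz_one (β : ℝ) :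
    regRiesz β 1 = 4 / (4 ^ β * √2) * (Gamma (3 / 2 - β) / Gamma (3 - β)) := by
  simp [regRiesz]

lemma regRiesz_succ (β : ℝ) (k : ℕ) :
    regRiesz β (k + 1) = regRiesz β 1 * ((k + 1) * pochRatio β (3 - β) k) := by
  rw [regRiesz_one, regRiesz, Nat.add_sub_cancel, Nat.cast_succ]

lemma regRiesz_eq_Riesz (hβ₀ : 0 < β) (hβ : β < 3) (k : ℕ) :
    regRiesz β (k + 1) = Riesz β (k + 1) := by
  have hΓ := Gamma_add_natCast_div hβ₀ (sub_pos.2 hβ) k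
  have hΓβ : Gamma β ≠ 0 := (Gamma_pos_of_pos hβ₀).ne'
  have hΓβ' : Gamma (3 - β) ≠ 0 := (Gamma_pos_of_pos (sub_pos.2 hβ)).ne'
  have hratio : pochRatio β (3 - β) k =
      Gamma (3 - β) / Gamma β * (Gamma (β + k) / Gamma (3 - β + k)) := by
    rw [hΓ]
    field_simp
  rw [regRiesz, Riesz, Nat.add_sub_cancel, Nat.cast_succ, hratio,
    show (k : ℝ) + 1 + β - 1 = β + k by ring, show (k : ℝ) + 1 - β + 2 = 3 - β + k by ring]
  field_simp

lemma Riesz_pos (hβ₀ : 0 < β) (hβ : β < 3 / 2) {n : ℕ} (hn : 1 ≤ n) : 0 < Riesz β n := by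
  have hn' : (1 : ℝ) ≤ n := by exact_mod_cast hn
  have hβ' : 0 < 3 / 2 - β := sub_pos.2 hβ
  have hnum : 0 < n + β - 1 := by linarith
  have hden : 0 < n - β + 2 := by linarith
  unfold Riesz
  positivity [Gamma_pos_of_pos hβ', Gamma_pos_of_pos hnum, Gamma_pos_of_pos hden]

lemma regRiesz_sub_one_one (hβ : β < 3 / 2) :
    regRiesz (β - 1) 1 = regRiesz β 1 * (4 * (3 / 2 - β) / (3 - β)) := by
  have hΓ : Gamma (3 - β) ≠ 0 := (Gamma_pos_of_pos (by linarith)).ne'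
  have hβ' : 3 - β ≠ 0 := by linarith
  rw [regRiesz_one, regRiesz_one, show 3 / 2 - (β - 1) = 3 / 2 - β + 1 by ring,
    show 3 - (β - 1) = 3 - β + 1 by ring, Gamma_add_one (by linarith), Gamma_add_one hβ',
    rpow_sub_one (by norm_num)]
  field_simp

lemma regRiesz_sub_one (hβ : β < 3 / 2) (n : ℕ) :
    regRiesz (β - 1) (n + 1) =
      2 * regRiesz β (n + 1) - regRiesz β (n + 2) - regRiesz β n := by
  have hβ' : 0 < 3 - β := by linarith
  cases n with
  | zero =>
    rw [regRiesz_succ β 1, zero_add, regRiesz_zero, regRiesz_sub_one_one hβ, pochRatio_succ,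
      pochRatio_zero]
    field_simp
    push_cast
    ring
  | succ k =>
    have hk : 3 - β + k ≠ 0 := by positivity
    have hk' : 3 - β + (k + 1) ≠ 0 := by positivity
    have hk'' : 3 - β + 1 + k ≠ 0 := by positivity
    have hleft : pochRatio (β - 1) (3 - (β - 1)) (k + 1) =
        (β - 1) / (3 - β + 1 + k) * ((3 - β) / (3 - β + k) * pochRatio β (3 - β) k) := by
      rw [show 3 - (β - 1) = 3 - β + 1 by ring, pochRatio_succ_left, sub_add_cancel,
        pochRatio_add_one_right β hβ']
    rw [regRiesz_succ (β - 1) (k + 1), regRiesz_succ β (k + 1), regRiesz_succ β (k + 2),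
      regRiesz_succ β k, hleft, regRiesz_sub_one_one hβ, pochRatio_succ β _ (k + 1),
      pochRatio_succ β _ k]
    push_cast
    field_simp
    ring

lemma dougallTerm_two_three_halves (β γ : ℝ) (k : ℕ) :
    dougallTerm 2 β γ (3 / 2) k =
      (k + 1) ^ 2 * (pochRatio β (3 - β) k * pochRatio γ (3 - γ) k) := by
  rw [dougallTerm, pochRatio_two_one, show (1 : ℝ) + 2 = 3 by norm_num,
    show (3 : ℝ) - 3 / 2 = 3 / 2 by norm_num, pochRatio_self (by norm_num)]
  ring

lemma dougallValue_two_three_halves (β γ : ℝ) :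
    dougallValue 2 β γ (3 / 2) = √π / 4 * (Gamma (3 - β) * Gamma (3 - γ) *
      Gamma (3 / 2 - (β + γ)) / (Gamma (3 - (β + γ)) * Gamma (3 / 2 - β) * Gamma (3 / 2 - γ))) := by
  have hΓ : Gamma (3 / 2) = √π / 2 := by
    rw [show (3 / 2 : ℝ) = 1 / 2 + 1 by norm_num, Gamma_add_one (by norm_num), Gamma_one_half_eq]
    ring
  rw [dougallValue, show (1 : ℝ) + 2 = 3 by norm_num, show (3 : ℝ) - 3 / 2 = 3 / 2 by norm_num, hΓ,
    show 3 - β - γ - 3 / 2 = 3 / 2 - (β + γ) by ring, show 3 - β - γ = 3 - (β + γ) by ring,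
    show 3 - β - 3 / 2 = 3 / 2 - β by ring, show 3 - γ - 3 / 2 = 3 / 2 - γ by ring,
    Gamma_ofNat_eq_factorial 2, Nat.factorial_two]
  ring

theorem hasSum_regRiesz_mul_regRiesz (hβ : β < 3 / 2) (hγ : γ < 3 / 2) (h : β + γ < 3 / 2) :
    HasSum (fun m ↦ regRiesz β (m + 1) * regRiesz γ (m + 1)) (√π / √2 * regRiesz (β + γ) 1) := by
  have hdougall : HasSum (dougallTerm 2 β γ (3 / 2)) (dougallValue 2 β γ (3 / 2)) :=
    hasSum_dougallTerm (by norm_num) (by norm_num) (by linarith) (by linarith) (by norm_num)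
      (by linarith)
  have hΓβ : Gamma (3 - β) ≠ 0 := (Gamma_pos_of_pos (by linarith)).ne'
  have hΓγ : Gamma (3 - γ) ≠ 0 := (Gamma_pos_of_pos (by linarith)).ne'
  have hΓβ' : Gamma (3 / 2 - β) ≠ 0 := (Gamma_pos_of_pos (by linarith)).ne'
  have hΓγ' : Gamma (3 / 2 - γ) ≠ 0 := (Gamma_pos_of_pos (by linarith)).ne'
  have hvalue : √π / √2 * regRiesz (β + γ) 1 =
      regRiesz β 1 * regRiesz γ 1 * dougallValue 2 β γ (3 / 2) := by
    rw [dougallValue_two_three_halves, regRiesz_one, regRiesz_one, regRiesz_one,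
      rpow_add (by norm_num)]
    generalize Gamma (3 / 2 - β) = Cβ at hΓβ' ⊢
    generalize Gamma (3 / 2 - γ) = Cγ at hΓγ' ⊢
    field_simp
  rw [hvalue]
  refine (hdougall.mul_left _).congr_fun fun m ↦ ?_
  rw [dougallTerm_two_three_halves, regRiesz_succ, regRiesz_succ γ]
  ring

end regRiesz

/-! ### The fractional Laplacian -/

section Kker

variable {α σ : ℝ}

lemma rbinom_add_one {a : ℝ} (ha : a + 1 ≠ 0) (b : ℝ) :
    rbinom (a + 1) (b + 1) = rbinom a b + rbinom a (b + 1) := by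
  rw [rbinom, rbinom, rbinom, Gamma_add_one ha, show a + 1 - (b + 1) + 1 = a - b + 1 by ring]
  simp only [div_eq_mul_inv, mul_inv]
  rw [inv_Gamma_eq_mul_inv_Gamma_add_one (b + 1),
    inv_Gamma_eq_mul_inv_Gamma_add_one (a - (b + 1) + 1),
    show a - (b + 1) + 1 + 1 = a - b + 1 by ring]
  ring

lemma rbinom_add_two {a : ℝ} (ha : 0 < a + 1) (b : ℝ) :
    rbinom (a + 2) (b + 1) = rbinom a (b - 1) + 2 * rbinom a b + rbinom a (b + 1) := by
  have hpascal := rbinom_add_one ha.ne' (b - 1)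
  rw [sub_add_cancel] at hpascal
  rw [show a + 2 = a + 1 + 1 by ring, rbinom_add_one (by linarith), rbinom_add_one ha.ne' b,
    hpascal]
  ring

lemma Kker_zero_right (σ : ℝ) (m : ℕ) : Kker σ m 0 = 0 := by simp [Kker]

lemma Kker_add_one (hσ : -(1 / 2) < σ) (m n : ℕ) :
    Kker (σ + 1) m (n + 1) = 2 * Kker σ m (n + 1) - Kker σ m (n + 2) - Kker σ m n := by
  have hσ' : 0 < 2 * σ + 1 := by linarith
  have hminus := rbinom_add_two hσ' (σ + m - (n + 1))
  have hplus := rbinom_add_two hσ' (σ + m + (n + 1))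
  rw [show σ + m - (n + 1 : ℝ) - 1 = σ + m - (n + 2) by ring,
    show σ + m - (n + 1 : ℝ) + 1 = σ + m - n by ring] at hminus
  rw [show σ + m + (n + 1 : ℝ) - 1 = σ + m + n by ring,
    show σ + m + (n + 1 : ℝ) + 1 = σ + m + (n + 2) by ring] at hplus
  simp only [Kker]
  push_cast
  rw [show 2 * (σ + 1) = 2 * σ + 2 by ring, show σ + 1 + m - (n + 1 : ℝ) = σ + m - n by ring,
    show σ + 1 + m + (n + 1 : ℝ) = σ + m + (n + 2) by ring, hminus, hplus]
  ring

lemma rbinom_add_one_right_mul (a b : ℝ) : rbinom a (b + 1) * (b + 1) = rbinom a b * (a - b) := by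
  rw [rbinom, rbinom, show a - (b + 1) + 1 = a - b by ring]
  simp only [div_eq_mul_inv, mul_inv]
  rw [inv_Gamma_eq_mul_inv_Gamma_add_one (b + 1), inv_Gamma_eq_mul_inv_Gamma_add_one (a - b)]
  ring

lemma rbinom_two_mul_add_natCast (hσ : -1 < σ) (k : ℕ) :
    rbinom (2 * σ) (σ + k) = (-1) ^ k * rbinom (2 * σ) σ * pochRatio (-σ) (σ + 1) k := by
  induction k with
  | zero => simp
  | succ k ih =>
    have hk : σ + k + 1 ≠ 0 := by linarith [k.cast_nonneg (α := ℝ)]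
    have hk' : σ + 1 + k ≠ 0 := by linarith [k.cast_nonneg (α := ℝ)]
    have hstep := rbinom_add_one_right_mul (2 * σ) (σ + k)
    rw [Nat.cast_succ, ← add_assoc, eq_div_of_mul_eq hk hstep, ih, pochRatio_succ]
    field_simp
    ring

lemma pochRatio_neg_sub_pochRatio_neg_add_two (hσ : -1 < σ) (k : ℕ) :
    pochRatio (-σ) (σ + 1) k - pochRatio (-σ) (σ + 1) (k + 2) =
      2 * (2 * σ + 1) / ((σ + 1) * (σ + 2)) * ((k + 1) * pochRatio (-σ) (σ + 3) k) := by
  have hright : pochRatio (-σ) (σ + 3) k =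
      (σ + 2) / (σ + 2 + k) * ((σ + 1) / (σ + 1 + k) * pochRatio (-σ) (σ + 1) k) := by
    rw [← pochRatio_add_one_right (-σ) (by linarith), show σ + 1 + 1 = σ + 2 by ring,
      ← pochRatio_add_one_right (-σ) (by linarith), show σ + 2 + 1 = σ + 3 by ring]
  have hσ₁ : σ + 1 ≠ 0 := by linarith
  have hσ₂ : σ + 2 ≠ 0 := by linarith
  have hk : σ + 1 + k ≠ 0 := by linarith [k.cast_nonneg (α := ℝ)]
  have hk' : σ + 2 + k ≠ 0 := by linarith [k.cast_nonneg (α := ℝ)]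
  have hk'' : σ + 1 + (k + 1) ≠ 0 := by linarith [k.cast_nonneg (α := ℝ)]
  rw [hright, pochRatio_succ, pochRatio_succ]
  push_cast
  field_simp
  ring

lemma rbinom_two_mul_self_mul (hσ : -(1 / 2) < σ) :
    rbinom (2 * σ) σ * (2 * (2 * σ + 1) / ((σ + 1) * (σ + 2))) =
      √2 / √π * regRiesz (-σ) 1 := by
  have hσ' : 2 * σ + 1 ≠ 0 := by linarith
  have hσ₁ : σ + 1 ≠ 0 := by linarith
  have hσ₂ : σ + 2 ≠ 0 := by linarith
  have hdup := Gamma_mul_Gamma_add_half (σ + 1)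
  have hpow : (2 : ℝ) ^ (1 - 2 * (σ + 1)) = (2 * 4 ^ σ)⁻¹ := by
    rw [show 1 - 2 * (σ + 1) = -(1 + 2 * σ) by ring, rpow_neg (by norm_num),
      rpow_add (by norm_num), rpow_mul (by norm_num)]
    norm_num
  rw [hpow, show σ + 1 + 1 / 2 = 3 / 2 + σ by ring, show 2 * (σ + 1) = 2 * σ + 1 + 1 by ring,
    Gamma_add_one hσ'] at hdup
  have hΓ : Gamma (3 + σ) = (σ + 2) * ((σ + 1) * Gamma (σ + 1)) := by
    rw [show 3 + σ = σ + 1 + 1 + 1 by ring, Gamma_add_one (by linarith),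
      Gamma_add_one (by linarith)]
    ring
  have hΓ₀ : Gamma (σ + 1) ≠ 0 := (Gamma_pos_of_pos (by linarith)).ne'
  rw [regRiesz_one, sub_neg_eq_add, sub_neg_eq_add, hΓ, rpow_neg (by norm_num), rbinom,
    show 2 * σ - σ + 1 = σ + 1 by ring]
  field_simp at hdup ⊢
  linear_combination -2 * hdup

lemma Kker_one_right (hσ : -(1 / 2) < σ) (k : ℕ) :
    Kker σ (k + 1) 1 = √2 / √π * regRiesz (-σ) (k + 1) := by
  have hminus : σ + ((k + 1 : ℕ) : ℝ) - (1 : ℕ) = σ + k := by push_cast; ring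
  have hplus : σ + ((k + 1 : ℕ) : ℝ) + (1 : ℕ) = σ + (k + 2 : ℕ) := by push_cast; ring
  have hsign : (-1 : ℝ) ^ k * (-1) ^ k = 1 := by rw [← mul_pow]; norm_num
  have hσ' : -1 < σ := by linarith
  rw [regRiesz_succ, ← mul_assoc, ← rbinom_two_mul_self_mul hσ, mul_assoc,
    show 3 - -σ = σ + 3 by ring, ← pochRatio_neg_sub_pochRatio_neg_add_two hσ', Kker, hminus, hplus,
    rbinom_two_mul_add_natCast hσ', rbinom_two_mul_add_natCast hσ']
  linear_combination (rbinom (2 * σ) σ *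
    (pochRatio (-σ) (σ + 1) k - pochRatio (-σ) (σ + 1) (k + 2))) * hsign

theorem hasSum_Kker_mul_regRiesz (hσ : -(1 / 2) < σ) (hα : α < 3 / 2) (h : α - σ < 3 / 2) (n : ℕ) :
    HasSum (fun m ↦ Kker σ (m + 1) n * regRiesz α (m + 1)) (regRiesz (α - σ) n) := by
  induction n using Nat.twoStepInduction generalizing σ with
  | zero => simp [Kker_zero_right]
  | one =>
    have hcol := (hasSum_regRiesz_mul_regRiesz (β := -σ) (by linarith) hα
      (by linarith)).mul_left (√2 / √π)
    have hconst : √2 / √π * (√π / √2) = 1 := by field_simp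
    rw [← mul_assoc, hconst, one_mul, neg_add_eq_sub] at hcol
    exact hcol.congr_fun fun m ↦ by rw [Kker_one_right hσ, mul_assoc]
  | more n hn hn' =>
    have hnext := hn' (σ := σ + 1) (by linarith) (by linarith)
    have hsum := (((hn' hσ h).mul_left 2).sub (hn hσ h)).sub hnext
    have hlap := regRiesz_sub_one h n
    rw [sub_sub] at hlap
    rw [show regRiesz (α - σ) (n + 2) = 2 * regRiesz (α - σ) (n + 1) - regRiesz (α - σ) n -
      regRiesz (α - (σ + 1)) (n + 1) by linarith]
    exact hsum.congr_fun fun m ↦ by rw [Kker_add_one hσ]; ring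

end Kker

theorem stmt_6_general (σ α : ℝ) (hσ : -(1 / 2) < σ) (hα₀ : 0 < α) (hα : α < 3 / 2) (hσα : σ < α)
    (hασ : α - σ < 3 / 2) (n : ℕ) (hn : 1 ≤ n) :
    Summable (fun m : ℕ ↦ |Kker σ (m + 1) n * Riesz α (m + 1)|) ∧
    (∑' m : ℕ, Kker σ (m + 1) n * Riesz α (m + 1)) = Riesz (α - σ) n ∧
    0 < Riesz α n ∧ 0 < Riesz (α - σ) n := by
  have hsum := hasSum_Kker_mul_regRiesz hσ hα hασ n
  obtain ⟨k, rfl⟩ := Nat.exists_eq_add_of_le' hn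
  simp only [regRiesz_eq_Riesz hα₀ (by linarith : α < 3)] at hsum
  rw [regRiesz_eq_Riesz (sub_pos.2 hσα) (by linarith)] at hsum
  exact ⟨hsum.summable.abs, hsum.tsum_eq, Riesz_pos hα₀ hα hn, Riesz_pos (sub_pos.2 hσα) hασ hn⟩

/-- `(-Δ_ℕ)^σ I_α = I_{α-σ}`; in particular `I_α` is a strictly positive
supersolution of `(-Δ_ℕ)^σ u = 0` on `ℕ`. -/
theorem stmt_6 (σ α : ℝ) (hσ0 : 0 < σ) (hσ3 : σ < 3/2)
    (hα0 : 0 < α) (hα3 : α < 3/2) (hα1 : σ < α) (hα2 : α < 1 + σ)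
    (n : ℕ) (hn : 1 ≤ n) :
    Summable (fun m : ℕ => |Kker σ (m + 1) n * Riesz α (m + 1)|) ∧
    (∑' m : ℕ, Kker σ (m + 1) n * Riesz α (m + 1)) = Riesz (α - σ) n ∧
    0 < Riesz α n ∧ 0 < Riesz (α - σ) n :=
  stmt_6_general σ α (by linarith) hα0 hα3 hα1 (by linarith) n hn
end

section
/- Let α ∈ (0,3/2) and n ≥ 1 an integer. Then √(2/π)·∫_{−1}^{1} U_{n−1}(x)·2^{−α}·(1−x)^{−α}·√(1−x²) dx = (4n/(4^α·√2))·Γ(3/2−α)·Γ(n+α−1)/(Γ(α)·Γ(n−α+2)), where U_{n−1} is the Chebyshev polynomial of the second kind of degree n−1; moreover this value is strictly positive. -/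
open Real Filter

/-!
Write `w a b x = (1 - x) ^ a * (1 + x) ^ b` and `M k a` for the integral of `U_k * w a (1 / 2)` over
`[-1, 1]`. Up to constants the integral in question is `M (n - 1) (1 / 2 - α)`. Substituting
`2 * x = 2 - 2 * (1 - x)` in the three-term recurrence of the `U_k` and absorbing the factor `1 - x`
into the weight, `(1 - x) * w a b x = w (a + 1) b x`, gives
`M (k + 2) a = 2 * M (k + 1) a - M k a - 2 * M (k + 1) (a + 1)`.
As `M (-1) a = 0` and `M 0 a` is a beta integral, this recurrence determines every `M k a`, and the
closed form follows by induction on `k`, simultaneously for all `a`.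
-/

section RealBeta

variable {u v : ℝ}

lemma ofReal_rpow_mul_one_sub_rpow {x : ℝ} (hx : x ∈ Set.Icc (0 : ℝ) 1) :
    ((x ^ (u - 1) * (1 - x) ^ (v - 1) : ℝ) : ℂ) =
      (x : ℂ) ^ ((u : ℂ) - 1) * (1 - (x : ℂ)) ^ ((v : ℂ) - 1) := by
  rw [Complex.ofReal_mul, Complex.ofReal_cpow hx.1, Complex.ofReal_cpow (sub_nonneg.2 hx.2)]
  push_cast
  rfl

lemma intervalIntegrable_rpow_mul_one_sub_rpow (hu : 0 < u) (hv : 0 < v) :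
    IntervalIntegrable (fun x : ℝ ↦ x ^ (u - 1) * (1 - x) ^ (v - 1)) MeasureTheory.volume 0 1 := by
  have hconv := Complex.betaIntegral_convergent (u := u) (v := v) (by simpa) (by simpa)
  rw [intervalIntegrable_iff_integrableOn_Icc_of_le zero_le_one] at hconv ⊢
  refine MeasureTheory.IntegrableOn.congr_fun hconv.re (fun x hx ↦ ?_) measurableSet_Icc
  simp only [← ofReal_rpow_mul_one_sub_rpow hx, RCLike.re_to_complex, Complex.ofReal_re]

lemma integral_rpow_mul_one_sub_rpow (hu : 0 < u) (hv : 0 < v) :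
    ∫ x in (0 : ℝ)..1, x ^ (u - 1) * (1 - x) ^ (v - 1) = ProbabilityTheory.beta u v := by
  have hcast : Complex.betaIntegral u v =
      ((∫ x in (0 : ℝ)..1, x ^ (u - 1) * (1 - x) ^ (v - 1) : ℝ) : ℂ) := by
    rw [Complex.betaIntegral, ← intervalIntegral.integral_ofReal]
    refine intervalIntegral.integral_congr fun x hx ↦ ?_
    rw [Set.uIcc_of_le zero_le_one] at hx
    exact (ofReal_rpow_mul_one_sub_rpow hx).symm
  rw [ProbabilityTheory.beta_eq_betaIntegralReal u v hu hv, hcast, Complex.ofReal_re]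

end RealBeta

section JacobiWeight

/-- The weight function of the Jacobi polynomials, used on the interval `[-1, 1]`. -/
noncomputable def jacobiWeight (a b x : ℝ) : ℝ :=
  (1 - x) ^ a * (1 + x) ^ b

variable {a b x : ℝ}

lemma jacobiWeight_one_sub_two_mul (hx : x ∈ Set.Icc (0 : ℝ) 1) :
    jacobiWeight a b (1 - 2 * x) = 2 ^ (a + b) * (x ^ a * (1 - x) ^ b) := by
  rw [jacobiWeight, show 1 - (1 - 2 * x) = 2 * x by ring,
    show 1 + (1 - 2 * x) = 2 * (1 - x) by ring, mul_rpow zero_le_two hx.1,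
    mul_rpow zero_le_two (sub_nonneg.2 hx.2), rpow_add zero_lt_two]
  ring

lemma one_sub_mul_jacobiWeight (ha : a + 1 ≠ 0) (hx : x ≤ 1) :
    (1 - x) * jacobiWeight a b x = jacobiWeight (a + 1) b x := by
  rw [jacobiWeight, jacobiWeight, rpow_add_one' (sub_nonneg.2 hx) ha]
  ring

lemma intervalIntegrable_jacobiWeight (ha : -1 < a) (hb : -1 < b) :
    IntervalIntegrable (jacobiWeight a b) MeasureTheory.volume (-1) 1 := by
  have hbeta := intervalIntegrable_rpow_mul_one_sub_rpow (u := a + 1) (v := b + 1)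
    (by linarith) (by linarith)
  simp only [add_sub_cancel_right] at hbeta
  have hpull : IntervalIntegrable (fun x ↦ jacobiWeight a b (1 - 2 * x))
      MeasureTheory.volume 0 1 := by
    refine (hbeta.const_mul (2 ^ (a + b))).congr_uIoo fun x hx ↦ ?_
    rw [Set.uIoo_of_le zero_le_one] at hx
    exact (jacobiWeight_one_sub_two_mul (Set.Ioo_subset_Icc_self hx)).symm
  have hpush := (hpull.comp_mul_left (c := 2⁻¹)).comp_sub_left 1
  rw [zero_div, sub_zero, one_div, inv_inv, show (1 : ℝ) - 2 = -1 by norm_num] at hpush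
  simpa only [mul_inv_cancel_left₀ (two_ne_zero' ℝ), sub_sub_cancel] using hpush.symm

lemma integral_jacobiWeight (ha : -1 < a) (hb : -1 < b) :
    ∫ x in (-1 : ℝ)..1, jacobiWeight a b x =
      2 ^ (a + b + 1) * ProbabilityTheory.beta (a + 1) (b + 1) := by
  calc ∫ x in (-1 : ℝ)..1, jacobiWeight a b x
      = 2 * ∫ x in (0 : ℝ)..1, jacobiWeight a b (1 - 2 * x) := by
        rw [← smul_eq_mul, intervalIntegral.smul_integral_comp_sub_mul]
        norm_num
    _ = 2 * ∫ x in (0 : ℝ)..1, 2 ^ (a + b) * (x ^ (a + 1 - 1) * (1 - x) ^ (b + 1 - 1)) := by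
        congr 1
        refine intervalIntegral.integral_congr fun x hx ↦ ?_
        rw [Set.uIcc_of_le zero_le_one] at hx
        simp only [jacobiWeight_one_sub_two_mul hx, add_sub_cancel_right]
    _ = 2 ^ (a + b + 1) * ProbabilityTheory.beta (a + 1) (b + 1) := by
        rw [intervalIntegral.integral_const_mul,
          integral_rpow_mul_one_sub_rpow (by linarith) (by linarith), rpow_add_one two_ne_zero]
        ring

lemma integral_jacobiWeight_add_one_left (ha : -1 < a) (hb : -1 < b) :
    ∫ x in (-1 : ℝ)..1, jacobiWeight (a + 1) b x =
      2 * (a + 1) / (a + b + 2) * ∫ x in (-1 : ℝ)..1, jacobiWeight a b x := by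
  have hsum : 0 < a + 1 + (b + 1) := by linarith
  rw [integral_jacobiWeight (by linarith) hb, integral_jacobiWeight ha hb, ProbabilityTheory.beta,
    ProbabilityTheory.beta, add_right_comm (a + 1) 1, add_right_comm a 1 b,
    rpow_add_one two_ne_zero (a + b + 1), Gamma_add_one (by linarith : a + 1 ≠ 0),
    Gamma_add_one hsum.ne', show a + b + 2 = a + 1 + (b + 1) by ring]
  have hΓ : Gamma (a + 1 + (b + 1)) ≠ 0 := (Gamma_pos_of_pos hsum).ne'
  field_simp

lemma integral_jacobiWeight_one_half (ha : -1 < a) :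
    ∫ x in (-1 : ℝ)..1, jacobiWeight a (1 / 2) x =
      2 ^ (a + 1 / 2) * √π * Gamma (a + 1) / Gamma (a + 5 / 2) := by
  have hGamma : Gamma (1 / 2 + 1) = √π / 2 := by
    rw [Gamma_add_one (by norm_num), Gamma_one_half_eq]
    ring
  rw [integral_jacobiWeight ha (by norm_num), ProbabilityTheory.beta, hGamma,
    rpow_add_one two_ne_zero, show a + 1 + (1 / 2 + 1) = a + 5 / 2 by ring]
  ring

lemma one_sub_rpow_mul_sqrt_one_sub_sq (hx : x ∈ Set.Ioo (-1 : ℝ) 1) :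
    (1 - x) ^ a * √(1 - x ^ 2) = jacobiWeight (a + 1 / 2) (1 / 2) x := by
  have hx' : 0 < 1 - x := sub_pos.2 hx.2
  rw [jacobiWeight, show 1 - x ^ 2 = (1 - x) * (1 + x) by ring, sqrt_mul hx'.le, rpow_add hx',
    sqrt_eq_rpow, sqrt_eq_rpow]
  ring

end JacobiWeight

section ChebyshevUMoment

open Polynomial Polynomial.Chebyshev

/-- The integral over `[-1, 1]` of the Chebyshev polynomial `U_k` against the Jacobi weight with
exponents `a` and `b`. The index `k` is an integer so that the recurrence can start from
`U_{-1} = 0`. -/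
noncomputable def chebyshevUMoment (k : ℤ) (a b : ℝ) : ℝ :=
  ∫ x in (-1 : ℝ)..1, (U ℝ k).eval x * jacobiWeight a b x

lemma chebyshevUMoment_neg_one (a b : ℝ) : chebyshevUMoment (-1) a b = 0 := by
  simp [chebyshevUMoment]

lemma chebyshevUMoment_zero (a b : ℝ) :
    chebyshevUMoment 0 a b = ∫ x in (-1 : ℝ)..1, jacobiWeight a b x := by
  simp [chebyshevUMoment]

lemma chebyshevUMoment_zero_add_one {a b : ℝ} (ha : -1 < a) (hb : -1 < b) :
    chebyshevUMoment 0 (a + 1) b = 2 * (a + 1) / (a + b + 2) * chebyshevUMoment 0 a b := by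
  simp only [chebyshevUMoment_zero, integral_jacobiWeight_add_one_left ha hb]

lemma intervalIntegrable_eval_mul_jacobiWeight {a b : ℝ} (ha : -1 < a) (hb : -1 < b) (p : ℝ[X]) :
    IntervalIntegrable (fun x ↦ p.eval x * jacobiWeight a b x) MeasureTheory.volume (-1) 1 :=
  (intervalIntegrable_jacobiWeight ha hb).continuousOn_mul p.continuousOn

lemma chebyshevUMoment_add_two {a b : ℝ} (ha : -1 < a) (hb : -1 < b) (k : ℤ) :
    chebyshevUMoment (k + 2) a b = 2 * chebyshevUMoment (k + 1) a b - chebyshevUMoment k a b -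
      2 * chebyshevUMoment (k + 1) (a + 1) b := by
  have hk := intervalIntegrable_eval_mul_jacobiWeight ha hb (U ℝ k)
  have hk₁ := (intervalIntegrable_eval_mul_jacobiWeight ha hb (U ℝ (k + 1))).const_mul 2
  have hk₁' := (intervalIntegrable_eval_mul_jacobiWeight (a := a + 1) (by linarith) hb
    (U ℝ (k + 1))).const_mul 2
  simp only [chebyshevUMoment]
  rw [← intervalIntegral.integral_const_mul, ← intervalIntegral.integral_const_mul,
    ← intervalIntegral.integral_sub hk₁ hk, ← intervalIntegral.integral_sub (hk₁.sub hk) hk₁']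
  refine intervalIntegral.integral_congr fun x hx ↦ ?_
  rw [Set.uIcc_of_le (by norm_num)] at hx
  simp only [U_add_two, eval_sub, eval_mul, eval_ofNat, eval_X,
    ← one_sub_mul_jacobiWeight (b := b) (by linarith : a + 1 ≠ 0) hx.2]
  ring

end ChebyshevUMoment

section ClosedForm

open Polynomial

lemma ascPochhammer_succ_eval_left {R : Type*} [CommSemiring R] (k : ℕ) (x : R) :
    (ascPochhammer R (k + 1)).eval x = x * (ascPochhammer R k).eval (x + 1) := by
  simp [ascPochhammer_succ_left]

lemma ascPochhammer_eval_eq_Gamma_div {x : ℝ} (hx : ∀ m : ℕ, x ≠ -m) (k : ℕ) :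
    (ascPochhammer ℝ k).eval x = Gamma (x + k) / Gamma x := by
  have hcomplex := Complex.Gamma_add_nat_div_Gamma_eq (n := k) (x : ℂ) (by exact_mod_cast hx)
  have hcast : (ascPochhammer ℂ k).eval (x : ℂ) = ((ascPochhammer ℝ k).eval x : ℝ) := by
    rw [← ascPochhammer_map Complex.ofRealHom]
    exact eval_map_apply Complex.ofRealHom x
  rw [hcast, ← Complex.ofReal_natCast, ← Complex.ofReal_add, Complex.Gamma_ofReal,
    Complex.Gamma_ofReal] at hcomplex
  exact_mod_cast hcomplex.symm

theorem chebyshevUMoment_natCast_one_half (k : ℕ) {a : ℝ} (ha : -1 < a) :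
    chebyshevUMoment k a (1 / 2) =
      (k + 1) * (ascPochhammer ℝ k).eval (1 / 2 - a) / (ascPochhammer ℝ k).eval (a + 5 / 2) *
        chebyshevUMoment 0 a (1 / 2) := by
  have hhalf : (-1 : ℝ) < 1 / 2 := by norm_num
  induction k using Nat.twoStepInduction generalizing a with
  | zero => simp
  | one =>
    have hrec := chebyshevUMoment_add_two ha hhalf (-1)
    norm_num only [chebyshevUMoment_neg_one, chebyshevUMoment_zero_add_one ha hhalf] at hrec
    simp only [Nat.cast_one, ascPochhammer_one, eval_X, hrec]
    -- In terms of `c = a + 5 / 2 > 0` every denominator is visibly positive.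
    obtain ⟨c, rfl⟩ : ∃ c, a = c - 5 / 2 := ⟨a + 5 / 2, by ring⟩
    have hc : 0 < c := by linarith
    rw [show c - 5 / 2 + 1 / 2 + 2 = c by ring, sub_add_cancel]
    field_simp
    ring
  | more k ih₀ ih₁ =>
    have hrec := chebyshevUMoment_add_two ha hhalf k
    have hnum : (ascPochhammer ℝ (k + 1)).eval (1 / 2 - (a + 1)) =
        (1 / 2 - (a + 1)) * (ascPochhammer ℝ k).eval (1 / 2 - a) := by
      rw [ascPochhammer_succ_eval_left, ← sub_sub, sub_add_cancel]
    push_cast at ih₁ ⊢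
    rw [hrec, ih₀ ha, ih₁ ha, ih₁ (by linarith : -1 < a + 1),
      chebyshevUMoment_zero_add_one ha hhalf, hnum]
    obtain ⟨c, rfl⟩ : ∃ c, a = c - 5 / 2 := ⟨a + 5 / 2, by ring⟩
    have hc : 0 < c := by linarith
    have hP : 0 < (ascPochhammer ℝ k).eval c := ascPochhammer_pos k c hc
    have hden : (ascPochhammer ℝ (k + 1)).eval (c + 1) =
        (ascPochhammer ℝ k).eval c * (c + k) * (c + (k + 1)) / c := by
      rw [eq_div_iff hc.ne', mul_comm, ← ascPochhammer_succ_eval_left, ascPochhammer_succ_eval,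
        ascPochhammer_succ_eval, Nat.cast_succ]
    rw [show c - 5 / 2 + 1 + 5 / 2 = c + 1 by ring, show c - 5 / 2 + 1 / 2 + 2 = c by ring,
      sub_add_cancel, hden]
    simp only [ascPochhammer_succ_eval]
    push_cast
    field_simp
    ring

end ClosedForm

lemma riesz_pos {α : ℝ} (hα₀ : 0 < α) (hα : α < 3 / 2) {n : ℕ} (hn : 1 ≤ n) : 0 < Riesz α n := by
  have hn' : (1 : ℝ) ≤ n := by exact_mod_cast hn
  have hnum : 0 < Gamma (3 / 2 - α) * Gamma (n + α - 1) :=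
    mul_pos (Gamma_pos_of_pos (by linarith)) (Gamma_pos_of_pos (by linarith))
  have hden : 0 < Gamma α * Gamma (n - α + 2) :=
    mul_pos (Gamma_pos_of_pos hα₀) (Gamma_pos_of_pos (by linarith))
  rw [Riesz, mul_assoc]
  exact div_pos (mul_pos (by positivity) hnum) hden

lemma integral_eval_U_mul_rpow_mul_sqrt (α : ℝ) (k : ℤ) :
    ∫ x in (-1 : ℝ)..1,
        (Polynomial.Chebyshev.U ℝ k).eval x * ((2 : ℝ) ^ (-α) * (1 - x) ^ (-α)) * √(1 - x ^ 2) =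
      2 ^ (-α) * chebyshevUMoment k (1 / 2 - α) (1 / 2) := by
  rw [chebyshevUMoment, ← intervalIntegral.integral_const_mul]
  refine intervalIntegral.integral_congr_Ioo_of_le (by norm_num) fun x hx ↦ ?_
  simp only [sub_eq_neg_add (1 / 2) α, ← one_sub_rpow_mul_sqrt_one_sub_sq hx]
  ring

lemma chebyshevUMoment_natCast_half_sub {α : ℝ} (hα : α < 3 / 2) (hα' : ∀ m : ℕ, α ≠ -m) (k : ℕ) :
    chebyshevUMoment k (1 / 2 - α) (1 / 2) =
      2 ^ (1 - α) * √π * (k + 1) * Gamma (3 / 2 - α) * Gamma (α + k) /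
        (Gamma α * Gamma (3 - α + k)) := by
  have hpole : ∀ m : ℕ, 3 - α ≠ -m := fun m ↦ by linarith [(Nat.cast_nonneg m : (0 : ℝ) ≤ m)]
  rw [chebyshevUMoment_natCast_one_half k (by linarith), chebyshevUMoment_zero,
    integral_jacobiWeight_one_half (by linarith), sub_sub_cancel,
    show 1 / 2 - α + 5 / 2 = 3 - α by ring, show 1 / 2 - α + 1 / 2 = 1 - α by ring,
    show 1 / 2 - α + 1 = 3 / 2 - α by ring, ascPochhammer_eval_eq_Gamma_div hα',
    ascPochhammer_eval_eq_Gamma_div hpole]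
  have hΓ : Gamma (3 - α) ≠ 0 := Gamma_ne_zero hpole
  field_simp

theorem stmt_7_general {α : ℝ} (hα : α < 3 / 2) (hα' : ∀ m : ℕ, α ≠ -m) {n : ℕ} (hn : 1 ≤ n) :
    √(2 / π) *
        (∫ x in (-1 : ℝ)..1,
          (Polynomial.Chebyshev.U ℝ ((n : ℤ) - 1)).eval x * ((2 : ℝ) ^ (-α) * (1 - x) ^ (-α)) *
            √(1 - x ^ 2)) =
      Riesz α n := by
  obtain ⟨k, rfl⟩ := Nat.exists_eq_add_of_le' hn
  have hfour : (4 : ℝ) ^ α = 2 ^ α * 2 ^ α := by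
    rw [← mul_rpow zero_le_two zero_le_two]
    norm_num
  push_cast
  rw [integral_eval_U_mul_rpow_mul_sqrt, add_sub_cancel_right,
    chebyshevUMoment_natCast_half_sub hα hα', Riesz, hfour, rpow_neg zero_le_two,
    rpow_sub zero_lt_two, rpow_one, sqrt_div zero_le_two]
  push_cast
  rw [show (k : ℝ) + 1 + α - 1 = α + k by ring, show (k : ℝ) + 1 - α + 2 = 3 - α + k by ring]
  field_simp
  rw [sq_sqrt zero_le_two]
  ring

/-- Explicit evaluation of the Riesz potential integral via Chebyshev polynomials. -/
theorem stmt_7 (α : ℝ) (hα0 : 0 < α) (hα3 : α < 3/2) (n : ℕ) (hn : 1 ≤ n) :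
    Real.sqrt (2 / π) *
        (∫ x in (-1 : ℝ)..1,
          (Polynomial.Chebyshev.U ℝ ((n : ℤ) - 1)).eval x * ((2 : ℝ) ^ (-α) * (1 - x) ^ (-α)) *
            Real.sqrt (1 - x ^ 2)) =
      (4 * n / (4 ^ α * Real.sqrt 2)) * Real.Gamma (3/2 - α) * Real.Gamma (n + α - 1) /
        (Real.Gamma α * Real.Gamma (n - α + 2)) ∧
    0 < (4 * n / (4 ^ α * Real.sqrt 2)) * Real.Gamma (3/2 - α) * Real.Gamma (n + α - 1) /
        (Real.Gamma α * Real.Gamma (n - α + 2)) := by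
  exact ⟨stmt_7_general hα3 (fun m ↦ by linarith [(Nat.cast_nonneg m : (0 : ℝ) ≤ m)]) hn,
    riesz_pos hα0 hα3 hn⟩
end
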